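/- Let K and L be convex bodies in R^m (m ≥ 2) such that the surface area measure of K is dominated by that of L, i.e., S(K,U) ≤ S(L,U) for every Borel set U ⊆ S^{m−1}. Then Vol(K) ≤ Vol(L). -/

import Mathlib

open MeasureTheory Set
open scoped ENNReal Pointwise RealInnerProductSpace Topology

noncomputable section

abbrev Euc (m : ℕ) : Type := EuclideanSpace ℝ (Fin m)

/-- A convex body: compact convex set with nonempty interior. -/
def IsConvexBody {m : ℕ} (K : Set (Euc m)) : Prop :=
  Convex ℝ K ∧ IsCompact K ∧ (interior K).Nonempty

/-- A (compact convex) polytope: convex hull of a finite set. -/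
def IsPolytope {m : ℕ} (P : Set (Euc m)) : Prop :=
  ∃ s : Finset (Euc m), P = convexHull ℝ (s : Set (Euc m))

def unitSphere (m : ℕ) : Set (Euc m) := Metric.sphere 0 1

/-- `n` is an outward unit normal to `K` at the boundary point `x`. -/
def IsOutwardNormalAt {m : ℕ} (K : Set (Euc m)) (x n : Euc m) : Prop :=
  x ∈ frontier K ∧ ‖n‖ = 1 ∧ ∀ y ∈ K, ⟪y - x, n⟫ ≤ 0

open Classical in
/-- The (set-valued choice of) Gauss map of `K`. -/
def gaussMap {m : ℕ} (K : Set (Euc m)) (x : Euc m) : Euc m :=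
  if h : ∃ n, IsOutwardNormalAt K x n then h.choose else 0

/-- The surface area measure of `K`: the pushforward under the Gauss map of the
`(m-1)`-dimensional Hausdorff measure on the boundary of `K`. -/
def surfMeasure {m : ℕ} (K : Set (Euc m)) : Measure (Euc m) :=
  Measure.map (gaussMap K) (μH[(m : ℝ) - 1].restrict (frontier K))

/-- The face of `P` in direction `n`. -/
def faceIn {m : ℕ} (P : Set (Euc m)) (n : Euc m) : Set (Euc m) :=
  {x ∈ P | ∀ y ∈ P, ⟪y, n⟫ ≤ ⟪x, n⟫}

/-- The `(m-1)`-dimensional volume of the face of `P` in direction `n`. -/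
def faceArea {m : ℕ} (P : Set (Euc m)) (n : Euc m) : ℝ≥0∞ :=
  μH[(m : ℝ) - 1] (faceIn P n)

/-- `n` is the outward unit normal to a facet ((m-1)-dimensional face) of `P`. -/
def IsFacetNormal {m : ℕ} (P : Set (Euc m)) (n : Euc m) : Prop :=
  ‖n‖ = 1 ∧ 0 < faceArea P n

/-!
Write `V` for volume, `h` for support functions and `S` for surface area measures, and translate
`L` so that `0` is interior to it. Then

  `m V(K)^((m-1)/m) V(L)^(1/m) ≤ ∫ h_L dS_K ≤ ∫ h_L dS_L ≤ m V(L)`,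

and it remains to cancel `V(L)^(1/m)`. The middle inequality is the domination hypothesis, as
`h_L ≥ 0`. The last one comes from cutting `∂L` into pieces with nearly constant normal `e`: the
cone over such a piece with apex `0` has volume at least about `h_L(e) / m` times its area.
The first is Minkowski's inequality: by Brunn–Minkowski the left side is at most
`(V(K + t L) - V(K)) / t`, while `K + t L` is covered by `K` and, for every piece of `∂K` with
nearly constant normal `e`, a slab over its projection along `e` of thickness about `t h_L(e)`;
as `t → 0` this bounds the quotient by about `∫ h_L dS_K`.
-/

open Module

section BrunnMinkowski

lemma volume_add_volume_le_of_isCompact {A B : Set ℝ} (hA : IsCompact A) (hB : IsCompact B)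
    (hA0 : A.Nonempty) (hB0 : B.Nonempty) : volume A + volume B ≤ volume (A + B) := by
  have ha := hA.sSup_mem hA0
  have hb := hB.sInf_mem hB0
  set a := sSup A
  set b := sInf B
  have hd : AEDisjoint volume ((· + b) '' A) ((a + ·) '' B) := by
    refine measure_mono_null (t := {a + b}) ?_ (by simp)
    rintro _ ⟨⟨x, hx, rfl⟩, ⟨y, hy, hxy⟩⟩
    have hxa : x ≤ a := le_csSup hA.bddAbove hx
    have hby : b ≤ y := csInf_le hB.bddBelow hy
    simp only [mem_singleton_iff] at hxy ⊢
    linarith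
  have hm : MeasurableSet ((a + ·) '' B) := (hB.image (by fun_prop)).measurableSet
  calc volume A + volume B
      = volume ((· + b) '' A) + volume ((a + ·) '' B) := by simp
    _ = volume ((· + b) '' A ∪ (a + ·) '' B) := (measure_union₀ hm.nullMeasurableSet hd).symm
    _ ≤ volume (A + B) := by
        refine measure_mono (union_subset ?_ ?_)
        · exact image_subset_iff.2 fun x hx => add_mem_add hx hb
        · exact image_subset_iff.2 fun x hx => add_mem_add ha hx

lemma volume_add_volume_le {A B : Set ℝ} (hA : MeasurableSet A) (hB : MeasurableSet B)
    (hA0 : A.Nonempty) (hB0 : B.Nonempty) : volume A + volume B ≤ volume (A + B) := by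
  obtain ⟨a, ha⟩ := hA0
  obtain ⟨b, hb⟩ := hB0
  rw [hA.measure_eq_iSup_isCompact, hB.measure_eq_iSup_isCompact]
  simp_rw [iSup_and']
  refine ENNReal.biSup_add_biSup_le' ⟨∅, by simp⟩ ⟨∅, by simp⟩ ?_
  rintro S ⟨hSA, hS⟩ T ⟨hTB, hT⟩
  calc volume S + volume T ≤ volume (insert a S) + volume (insert b T) :=
        add_le_add (measure_mono (subset_insert _ _)) (measure_mono (subset_insert _ _))
    _ ≤ volume (insert a S + insert b T) :=
        volume_add_volume_le_of_isCompact (hS.insert a) (hT.insert b)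
          (insert_nonempty _ _) (insert_nonempty _ _)
    _ ≤ volume (A + B) :=
        measure_mono (add_subset_add (insert_subset ha hSA) (insert_subset hb hTB))

lemma lintegral_add_lintegral_le_of_min_le {f g h : ℝ → ℝ} (hf : Measurable f) (hg : Measurable g)
    (hh : Measurable h) (hf0 : 0 ≤ f) (hg0 : 0 ≤ g) (hh0 : 0 ≤ h)
    (hf1 : IsLUB (range f) 1) (hg1 : IsLUB (range g) 1)
    (H : ∀ x y, min (f x) (g y) ≤ h (x + y)) :
    (∫⁻ x, ENNReal.ofReal (f x)) + ∫⁻ x, ENNReal.ofReal (g x) ≤ ∫⁻ x, ENNReal.ofReal (h x) := by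
  rw [lintegral_eq_lintegral_meas_lt _ (.of_forall hf0) hf.aemeasurable,
    lintegral_eq_lintegral_meas_lt _ (.of_forall hg0) hg.aemeasurable,
    lintegral_eq_lintegral_meas_lt _ (.of_forall hh0) hh.aemeasurable, ← lintegral_add_left]
  swap
  · exact Antitone.measurable fun s t hst => measure_mono fun x (hx : t < f x) => hst.trans_lt hx
  refine lintegral_mono fun t => ?_
  have nonempty_of_lt {k : ℝ → ℝ} (hk : IsLUB (range k) 1) (ht : t < 1) :
      {x | t < k x}.Nonempty := by
    obtain ⟨_, ⟨x, rfl⟩, hx⟩ := (lt_isLUB_iff hk).1 ht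
    exact ⟨x, hx⟩
  have eq_empty_of_le {k : ℝ → ℝ} (hk : IsLUB (range k) 1) (ht : 1 ≤ t) : {x | t < k x} = ∅ :=
    eq_empty_of_forall_notMem fun x hx => ((hk.1 (mem_range_self x)).trans ht).not_gt hx
  rcases lt_or_ge t 1 with ht | ht
  · refine (volume_add_volume_le (measurableSet_lt measurable_const hf)
      (measurableSet_lt measurable_const hg) (nonempty_of_lt hf1 ht)
      (nonempty_of_lt hg1 ht)).trans (measure_mono ?_)
    rintro _ ⟨x, hx, y, hy, rfl⟩
    exact (lt_min hx hy).trans_le (H x y)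
  · simp [eq_empty_of_le hf1 ht, eq_empty_of_le hg1 ht]

lemma add_pow_div_pow_le {n : ℕ} {a b α β : ℝ} (ha : 0 ≤ a) (hb : 0 ≤ b) (hα : 0 < α)
    (hβ : 0 < β) :
    (a + b) ^ (n + 1) / (α + β) ^ n ≤ a ^ (n + 1) / α ^ n + b ^ (n + 1) / β ^ n := by
  have hconv := (convexOn_pow (𝕜 := ℝ) (n + 1)).2 (mem_Ici.2 (show 0 ≤ a / α by positivity))
    (mem_Ici.2 (show 0 ≤ b / β by positivity)) (show 0 ≤ α / (α + β) by positivity)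
    (show 0 ≤ β / (α + β) by positivity) (by field_simp)
  simp only [smul_eq_mul] at hconv
  have hmean : α / (α + β) * (a / α) + β / (α + β) * (b / β) = (a + b) / (α + β) := by
    field_simp
  rw [hmean] at hconv
  calc (a + b) ^ (n + 1) / (α + β) ^ n = (α + β) * ((a + b) / (α + β)) ^ (n + 1) := by
        rw [div_pow, pow_succ (α + β)]; field_simp
    _ ≤ (α + β) * (α / (α + β) * (a / α) ^ (n + 1) + β / (α + β) * (b / β) ^ (n + 1)) := by
        gcongr
    _ = a ^ (n + 1) / α ^ n + b ^ (n + 1) / β ^ n := by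
        rw [div_pow, div_pow, pow_succ α, pow_succ β]; field_simp

/-- The Brunn–Minkowski inequality with exponent `n` for compact sets of positive measure. It is
stated without roots so that it passes from the slices of a product to the product. -/
def BrunnMinkowskiInequality {E : Type*} [TopologicalSpace E] [Add E] [MeasurableSpace E]
    (μ : Measure E) (n : ℕ) : Prop :=
  ∀ ⦃A B : Set E⦄, IsCompact A → IsCompact B → ∀ ⦃a b : ℝ⦄, 0 < a → 0 < b →
    a ^ n ≤ μ.real A → b ^ n ≤ μ.real B → (a + b) ^ n ≤ μ.real (A + B)

lemma nonempty_of_measureReal_pos {E : Type*} [MeasurableSpace E] {μ : Measure E} {A : Set E}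
    (h : 0 < μ.real A) : A.Nonempty := by
  by_contra hA
  simp [not_nonempty_iff_eq_empty.1 hA] at h

lemma brunnMinkowskiInequality_real : BrunnMinkowskiInequality (volume : Measure ℝ) 1 := by
  intro A B hA hB a b ha hb hAa hBb
  rw [pow_one] at *
  have hle := volume_add_volume_le_of_isCompact hA hB
    (nonempty_of_measureReal_pos (ha.trans_le hAa)) (nonempty_of_measureReal_pos (hb.trans_le hBb))
  have hreal := ENNReal.toReal_mono (hA.add hB).measure_lt_top.ne hle
  rw [ENNReal.toReal_add hA.measure_lt_top.ne hB.measure_lt_top.ne] at hreal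
  exact (add_le_add hAa hBb).trans hreal

section Slices

lemma prodMk_preimage_add_subset {F : Type*} [Add F] (A B : Set (ℝ × F)) (x y : ℝ) :
    Prod.mk x ⁻¹' A + Prod.mk y ⁻¹' B ⊆ Prod.mk (x + y) ⁻¹' (A + B) := by
  rintro _ ⟨u, hu, v, hv, rfl⟩
  exact ⟨_, hu, _, hv, rfl⟩

lemma isCompact_prodMk_preimage {F : Type*} [TopologicalSpace F] [T2Space F]
    {A : Set (ℝ × F)} (hA : IsCompact A) (x : ℝ) :
    IsCompact (Prod.mk x ⁻¹' A) :=
  (hA.image continuous_snd).of_isClosed_subset (hA.isClosed.preimage (by fun_prop))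
    fun _ hy => ⟨_, hy, rfl⟩

variable {F : Type*} [NormedAddCommGroup F] [MeasurableSpace F] {ν : Measure F}

/-- The functions compared are the normalised slice measures: a common lower bound `μ` of those of
`A` and `B` forces the slice of `A + B` to have measure at least `μ * (α + β) ^ n`. -/
lemma min_measureReal_prodMk_preimage_le [IsFiniteMeasureOnCompacts ν] {n : ℕ} (hn : n ≠ 0)
    (hν : BrunnMinkowskiInequality ν n)
    {A B : Set (ℝ × F)} (hA : IsCompact A) (hB : IsCompact B) {α β : ℝ} (hα : 0 < α) (hβ : 0 < β)
    (x y : ℝ) :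
    min (ν.real (Prod.mk x ⁻¹' A) / α ^ n) (ν.real (Prod.mk y ⁻¹' B) / β ^ n) ≤
      ν.real (Prod.mk (x + y) ⁻¹' (A + B)) / (α + β) ^ n := by
  set μ := min (ν.real (Prod.mk x ⁻¹' A) / α ^ n) (ν.real (Prod.mk y ⁻¹' B) / β ^ n)
  rcases le_or_gt μ 0 with hμ | hμ
  · exact hμ.trans (by positivity)
  set w := μ ^ (n : ℝ)⁻¹
  have hw : w ^ n = μ := Real.rpow_inv_natCast_pow hμ.le hn
  have hslices := hν (isCompact_prodMk_preimage hA x) (isCompact_prodMk_preimage hB y)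
    (a := w * α) (b := w * β) (by positivity) (by positivity)
    (by rw [mul_pow, hw]; exact (le_div_iff₀ (by positivity)).1 (min_le_left _ _))
    (by rw [mul_pow, hw]; exact (le_div_iff₀ (by positivity)).1 (min_le_right _ _))
  rw [← mul_add, mul_pow, hw] at hslices
  exact (le_div_iff₀ (by positivity)).2 (hslices.trans (measureReal_mono
    (prodMk_preimage_add_subset A B x y)
    (isCompact_prodMk_preimage (hA.add hB) _).measure_lt_top.ne))

variable [BorelSpace F] [SecondCountableTopology F] [SFinite ν]

lemma measurable_measureReal_prodMk_preimage {A : Set (ℝ × F)} (hA : IsCompact A) :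
    Measurable fun x => ν.real (Prod.mk x ⁻¹' A) :=
  (measurable_measure_prodMk_left hA.measurableSet).ennreal_toReal

variable [IsFiniteMeasureOnCompacts ν]

lemma lintegral_measureReal_prodMk_preimage_div {A : Set (ℝ × F)} (hA : IsCompact A) {s : ℝ}
    (hs : 0 < s) :
    ∫⁻ x, ENNReal.ofReal (ν.real (Prod.mk x ⁻¹' A) / s) =
      ENNReal.ofReal ((volume.prod ν).real A / s) := by
  simp_rw [ENNReal.ofReal_div_of_pos hs,
    ofReal_measureReal (isCompact_prodMk_preimage hA _).measure_lt_top.ne,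
    ofReal_measureReal hA.measure_lt_top.ne, div_eq_mul_inv]
  rw [lintegral_mul_const' _ _ (by simpa using hs), Measure.prod_apply hA.measurableSet]

lemma exists_pow_isLUB_measureReal_prodMk_preimage {A : Set (ℝ × F)} (hA : IsCompact A)
    (hpos : 0 < (volume.prod ν).real A) {n : ℕ} (hn : n ≠ 0) :
    ∃ α > 0, IsLUB (range fun x => ν.real (Prod.mk x ⁻¹' A) / α ^ n) 1 := by
  have hb : BddAbove (range fun x => ν.real (Prod.mk x ⁻¹' A)) := by
    refine ⟨ν.real (Prod.snd '' A), ?_⟩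
    rintro _ ⟨x, rfl⟩
    exact measureReal_mono (fun y hy => ⟨_, hy, rfl⟩)
      (hA.image continuous_snd).measure_lt_top.ne
  have hlub := isLUB_csSup (range_nonempty _) hb
  set s := sSup (range fun x => ν.real (Prod.mk x ⁻¹' A))
  have hs : 0 < s := by
    by_contra! hs
    have hz (x : ℝ) : ν.real (Prod.mk x ⁻¹' A) = 0 :=
      le_antisymm ((hlub.1 (mem_range_self x)).trans hs) measureReal_nonneg
    have hint := lintegral_measureReal_prodMk_preimage_div (ν := ν) hA one_pos
    simp only [hz, div_one, ENNReal.ofReal_zero, lintegral_zero] at hint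
    exact (ENNReal.ofReal_pos.2 hpos).ne hint
  refine ⟨s ^ (n : ℝ)⁻¹, by positivity, ?_⟩
  rw [Real.rpow_inv_natCast_pow hs.le hn]
  have hdiv := (OrderIso.divRight₀ s hs).isLUB_image'.2 hlub
  rwa [← range_comp, OrderIso.divRight₀_apply, div_self hs.ne'] at hdiv

lemma BrunnMinkowskiInequality.real_prod {n : ℕ} (hn : n ≠ 0)
    (hν : BrunnMinkowskiInequality ν n) :
    BrunnMinkowskiInequality ((volume : Measure ℝ).prod ν) (n + 1) := by
  intro A B hA hB a b ha hb hAa hBb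
  obtain ⟨α, hα, hαA⟩ := exists_pow_isLUB_measureReal_prodMk_preimage (n := n) hA
    ((pow_pos ha _).trans_le hAa) hn
  obtain ⟨β, hβ, hβB⟩ := exists_pow_isLUB_measureReal_prodMk_preimage (n := n) hB
    ((pow_pos hb _).trans_le hBb) hn
  have hlint := lintegral_add_lintegral_le_of_min_le
    ((measurable_measureReal_prodMk_preimage hA).div_const _)
    ((measurable_measureReal_prodMk_preimage hB).div_const _)
    ((measurable_measureReal_prodMk_preimage (hA.add hB)).div_const _)
    (fun _ => by positivity) (fun _ => by positivity) (fun _ => by positivity) hαA hβB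
    (min_measureReal_prodMk_preimage_le hn hν hA hB hα hβ)
  rw [lintegral_measureReal_prodMk_preimage_div hA (by positivity),
    lintegral_measureReal_prodMk_preimage_div hB (by positivity),
    lintegral_measureReal_prodMk_preimage_div (hA.add hB) (by positivity),
    ← ENNReal.ofReal_add (by positivity) (by positivity),
    ENNReal.ofReal_le_ofReal_iff (by positivity)] at hlint
  refine (div_le_div_iff_of_pos_right (c := (α + β) ^ n) (by positivity)).1 ?_
  calc (a + b) ^ (n + 1) / (α + β) ^ n ≤ a ^ (n + 1) / α ^ n + b ^ (n + 1) / β ^ n :=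
        add_pow_div_pow_le ha.le hb.le hα hβ
    _ ≤ _ := by gcongr
    _ ≤ _ := hlint

end Slices

section Transfer

variable {E F : Type*}
  [NormedAddCommGroup E] [NormedSpace ℝ E] [FiniteDimensional ℝ E]
  [MeasurableSpace E] [BorelSpace E]
  [NormedAddCommGroup F] [NormedSpace ℝ F] [MeasurableSpace F] [BorelSpace F]
  {μ : Measure E} [μ.IsAddHaarMeasure] {ν : Measure F} [ν.IsAddHaarMeasure]

lemma BrunnMinkowskiInequality.of_continuousLinearEquiv (e : F ≃L[ℝ] E) {n : ℕ} (hn : n ≠ 0)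
    (hν : BrunnMinkowskiInequality ν n) : BrunnMinkowskiInequality μ n := by
  intro A B hA hB a b ha hb hAa hBb
  have : (ν.map e).IsAddHaarMeasure := e.isAddHaarMeasure_map ν
  set κ : ℝ := (μ.addHaarScalarFactor (ν.map e) : ℝ)
  have hκ : 0 < κ := NNReal.coe_pos.2 (Measure.addHaarScalarFactor_pos_of_isAddHaarMeasure _ _)
  have hμ (S : Set E) : μ.real S = κ * ν.real (e ⁻¹' S) := by
    rw [measureReal_def, Measure.isAddLeftInvariant_eq_smul μ (ν.map e)]
    simp only [Measure.smul_apply, ENNReal.toReal_smul]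
    exact congrArg (κ * ENNReal.toReal ·) (e.toHomeomorph.toMeasurableEquiv.map_apply S)
  set γ := κ ^ (n : ℝ)⁻¹
  have hγ : 0 < γ := by positivity
  have hγκ : γ ^ n = κ := Real.rpow_inv_natCast_pow hκ.le hn
  rw [hμ, ← hγκ, ← div_le_iff₀' (by positivity), ← div_pow] at hAa hBb ⊢
  have hadd : e ⁻¹' (A + B) = e ⁻¹' A + e ⁻¹' B :=
    preimage_add e e.injective (by simp) (by simp)
  have := hν (e.toHomeomorph.isCompact_preimage.2 hA) (e.toHomeomorph.isCompact_preimage.2 hB)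
    (by positivity) (by positivity) hAa hBb
  rwa [hadd, add_div]

end Transfer

lemma brunnMinkowskiInequality_pi (n : ℕ) :
    BrunnMinkowskiInequality (volume : Measure (Fin (n + 1) → ℝ)) (n + 1) := by
  induction n with
  | zero =>
    exact brunnMinkowskiInequality_real.of_continuousLinearEquiv
      (ContinuousLinearEquiv.ofFinrankEq (by simp)) one_ne_zero
  | succ n ih =>
    exact (ih.real_prod n.succ_ne_zero).of_continuousLinearEquiv
      (ContinuousLinearEquiv.ofFinrankEq (by simp [add_comm])) (n + 1).succ_ne_zero

section Haar

variable {E : Type*} [NormedAddCommGroup E] [NormedSpace ℝ E] [FiniteDimensional ℝ E]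
  [MeasurableSpace E] [BorelSpace E]

lemma brunnMinkowskiInequality_addHaar [Nontrivial E] (μ : Measure E) [μ.IsAddHaarMeasure] :
    BrunnMinkowskiInequality μ (finrank ℝ E) := by
  obtain ⟨n, hn⟩ := Nat.exists_eq_succ_of_ne_zero (finrank_pos (R := ℝ) (M := E)).ne'
  rw [hn]
  exact (brunnMinkowskiInequality_pi n).of_continuousLinearEquiv
    (ContinuousLinearEquiv.ofFinrankEq (by simp [hn])) n.succ_ne_zero

theorem rpow_measure_add_rpow_measure_le [Nontrivial E] (μ : Measure E) [μ.IsAddHaarMeasure]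
    {A B : Set E} (hA : IsCompact A) (hB : IsCompact B) (hA0 : A.Nonempty) (hB0 : B.Nonempty) :
    μ A ^ (finrank ℝ E : ℝ)⁻¹ + μ B ^ (finrank ℝ E : ℝ)⁻¹ ≤ μ (A + B) ^ (finrank ℝ E : ℝ)⁻¹ := by
  have hd : 0 < (finrank ℝ E : ℝ)⁻¹ := by
    have := finrank_pos (R := ℝ) (M := E)
    positivity
  rcases eq_or_ne (μ A) 0 with hA' | hA'
  · obtain ⟨a, ha⟩ := hA0
    rw [hA', ENNReal.zero_rpow_of_pos hd, zero_add, ← measure_vadd μ a B]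
    gcongr
    exact vadd_set_subset_iff.2 fun b hb => add_mem_add ha hb
  rcases eq_or_ne (μ B) 0 with hB' | hB'
  · obtain ⟨b, hb⟩ := hB0
    rw [hB', ENNReal.zero_rpow_of_pos hd, add_zero, ← measure_vadd μ b A, add_comm A]
    gcongr
    exact vadd_set_subset_iff.2 fun a ha => add_mem_add hb ha
  have hn : finrank ℝ E ≠ 0 := finrank_pos.ne'
  have root_pow {S : Set E} (hS : IsCompact S) :
      ENNReal.ofReal (μ.real S ^ (finrank ℝ E : ℝ)⁻¹) = μ S ^ (finrank ℝ E : ℝ)⁻¹ := by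
    rw [← ENNReal.ofReal_rpow_of_nonneg measureReal_nonneg hd.le,
      ofReal_measureReal hS.measure_lt_top.ne]
  have hpos {S : Set E} (hS : IsCompact S) (hS' : μ S ≠ 0) : 0 < μ.real S :=
    ENNReal.toReal_pos hS' hS.measure_lt_top.ne
  have hA1 := hpos hA hA'
  have hB1 := hpos hB hB'
  rw [← root_pow hA, ← root_pow hB, ← root_pow (hA.add hB),
    ← ENNReal.ofReal_add (by positivity) (by positivity)]
  gcongr
  rw [Real.le_rpow_inv_iff_of_pos (by positivity) measureReal_nonneg (by positivity),
    Real.rpow_natCast]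
  exact brunnMinkowskiInequality_addHaar μ hA hB (by positivity) (by positivity)
    (Real.rpow_inv_natCast_pow measureReal_nonneg hn).le
    (Real.rpow_inv_natCast_pow measureReal_nonneg hn).le

end Haar

end BrunnMinkowski

section HausdorffMeasure

variable {X Y : Type*} [MetricSpace X] [MeasurableSpace X] [BorelSpace X]
  [MetricSpace Y] [MeasurableSpace Y] [BorelSpace Y] {f : X → Y} {s : Set X}

lemma euclideanHausdorffMeasure_image_le {C : NNReal} (hf : LipschitzOnWith C f s) (n : ℕ) :
    μHE[n] (f '' s) ≤ C ^ n * μHE[n] s := by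
  simp only [Measure.euclideanHausdorffMeasure_def, Measure.smul_apply, ENNReal.smul_def,
    smul_eq_mul]
  rw [mul_left_comm, ← ENNReal.rpow_natCast]
  gcongr
  exact hf.hausdorffMeasure_image_le n.cast_nonneg

lemma ofReal_pow_mul_euclideanHausdorffMeasure_le {κ : ℝ} (hκ : 0 < κ)
    (h : ∀ x ∈ s, ∀ y ∈ s, κ * dist x y ≤ dist (f x) (f y)) (n : ℕ) :
    ENNReal.ofReal κ ^ n * μHE[n] s ≤ μHE[n] (f '' s) := by
  have hanti : AntilipschitzWith (Real.toNNReal κ⁻¹) (s.domRestrict f) :=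
    .of_le_mul_dist fun x y => by
      rw [Real.coe_toNNReal _ (by positivity), ← div_eq_inv_mul, le_div_iff₀' hκ]
      exact h x x.2 y y.2
  have hle := hanti.le_hausdorffMeasure_image n.cast_nonneg univ
  rw [← isometry_subtype_coe.hausdorffMeasure_image (.inl n.cast_nonneg), image_univ, image_univ,
    Subtype.range_coe, range_domRestrict, ENNReal.rpow_natCast] at hle
  simp only [Measure.euclideanHausdorffMeasure_def, Measure.smul_apply, ENNReal.smul_def,
    smul_eq_mul]
  rw [mul_left_comm]
  gcongr
  refine (mul_le_mul_right hle _).trans_eq ?_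
  rw [← mul_assoc, ← mul_pow]
  change (ENNReal.ofReal κ * ENNReal.ofReal κ⁻¹) ^ n * _ = _
  rw [← ENNReal.ofReal_mul hκ.le, mul_inv_cancel₀ hκ.ne', ENNReal.ofReal_one, one_pow, one_mul]

end HausdorffMeasure

section Hyperplane

variable {V : Type*} [NormedAddCommGroup V] [InnerProductSpace ℝ V]

/-- The orthogonal projection onto the hyperplane through the origin with normal `e`. -/
abbrev hyperplaneProj (e : V) : V →L[ℝ] (ℝ ∙ e)ᗮ := (ℝ ∙ e)ᗮ.orthogonalProjectionOnto

lemma orthogonalProjectionOnto_span_singleton_eq {e : V} (he : ‖e‖ = 1) (p : V) :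
    (ℝ ∙ e).orthogonalProjectionOnto p = LinearIsometryEquiv.toSpanUnitSingleton e he ⟪p, e⟫ := by
  ext
  simp [Submodule.starProjection_unit_singleton ℝ he, real_inner_comm]

lemma norm_sq_eq_norm_hyperplaneProj_sq_add {e : V} (he : ‖e‖ = 1) (p : V) :
    ‖p‖ ^ 2 = ‖hyperplaneProj e p‖ ^ 2 + ⟪p, e⟫ ^ 2 := by
  rw [Submodule.norm_sq_eq_add_norm_sq_projection p (ℝ ∙ e), add_comm]
  congr 1
  rw [orthogonalProjectionOnto_span_singleton_eq he, LinearIsometryEquiv.norm_map,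
    Real.norm_eq_abs, sq_abs]

lemma norm_hyperplaneProj_le (e p : V) : ‖hyperplaneProj e p‖ ≤ ‖p‖ :=
  Submodule.norm_orthogonalProjectionOnto_apply_le _ _

lemma norm_le_norm_hyperplaneProj_add {e : V} (he : ‖e‖ = 1) (p : V) :
    ‖p‖ ≤ ‖hyperplaneProj e p‖ + |⟪p, e⟫| := by
  refine abs_le_of_sq_le_sq' ?_ (by positivity) |>.2
  rw [norm_sq_eq_norm_hyperplaneProj_sq_add he, add_sq, sq_abs]
  have := mul_nonneg (norm_nonneg (hyperplaneProj e p)) (abs_nonneg ⟪p, e⟫)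
  linarith

lemma hyperplaneProj_self (e : V) : hyperplaneProj e e = 0 :=
  Submodule.orthogonalProjectionOnto_eq_zero_iff.2
    ((Submodule.le_orthogonal_orthogonal _) (Submodule.mem_span_singleton_self e))

lemma eq_of_hyperplaneProj_eq {e p q : V} (he : ‖e‖ = 1)
    (hproj : hyperplaneProj e p = hyperplaneProj e q) (hinner : ⟪p, e⟫ = ⟪q, e⟫) : p = q := by
  have := norm_le_norm_hyperplaneProj_add he (p - q)
  rw [map_sub, inner_sub_left, hproj, hinner, sub_self, sub_self, norm_zero, abs_zero,
    add_zero] at this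
  exact sub_eq_zero.1 (norm_le_zero_iff.1 this)

/-- The central projection from the origin onto the hyperplane `⟪x, e⟫ = h`, followed by the
identification of that hyperplane with `eᗮ`. -/
def radialProj (e : V) (h : ℝ) (x : V) : (ℝ ∙ e)ᗮ := (h / ⟪x, e⟫) • hyperplaneProj e x

/-- The cone with apex at the origin, apex excluded, over the copy of `B` in the hyperplane
`⟪x, e⟫ = h`. -/
def flatCone (e : V) (h : ℝ) (B : Set (ℝ ∙ e)ᗮ) : Set V :=
  {p | ⟪p, e⟫ ∈ Ioc 0 h ∧ radialProj e h p ∈ B}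

variable [FiniteDimensional ℝ V]

lemma finrank_eq_finrank_hyperplane_add_one {e : V} (he : ‖e‖ = 1) :
    finrank ℝ V = finrank ℝ (ℝ ∙ e)ᗮ + 1 := by
  rw [← (ℝ ∙ e).finrank_add_finrank_orthogonal,
    finrank_span_singleton (norm_ne_zero_iff.1 (he ▸ one_ne_zero)), add_comm]

variable [MeasurableSpace V] [BorelSpace V]

lemma euclideanHausdorffMeasure_hyperplane {n : ℕ} (hn : finrank ℝ V = n + 1) {e : V}
    (he : ‖e‖ = 1) : (μHE[n] : Measure (ℝ ∙ e)ᗮ) = volume := by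
  have hrank := finrank_eq_finrank_hyperplane_add_one he
  rw [← InnerProductSpace.euclideanHausdorffMeasure_eq_volume,
    Nat.succ_injective (hn.symm.trans hrank)]

lemma measurePreserving_inner_hyperplaneProj {e : V} (he : ‖e‖ = 1) :
    MeasurePreserving (fun p => (⟪p, e⟫, hyperplaneProj e p))
      (volume : Measure V) ((volume : Measure ℝ).prod volume) := by
  have hline := (LinearIsometryEquiv.toSpanUnitSingleton e he).symm.measurePreserving
  have hV := Submodule.measurePreserving_measurableEquivProd (ℝ ∙ e) (0 : V)
  rw [InnerProductSpace.euclideanHausdorffMeasure_eq_volume] at hV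
  have hfun : (fun p => (⟪p, e⟫, hyperplaneProj e p)) =
      Prod.map (LinearIsometryEquiv.toSpanUnitSingleton e he).symm id ∘
        (ℝ ∙ e).measurableEquivProd (0 : V) := by
    ext p : 1
    simp [orthogonalProjectionOnto_span_singleton_eq he,
      -LinearIsometryEquiv.toSpanUnitSingleton_apply]
  rw [hfun]
  exact (hline.prod (.id _)).comp hV

lemma volume_le_of_fiber_le {e : V} (he : ‖e‖ = 1) {S : Set V} (hS : IsCompact S) {l : ℝ}
    (h : ∀ p ∈ S, ∀ q ∈ S, hyperplaneProj e p = hyperplaneProj e q → ⟪p - q, e⟫ ≤ l) :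
    volume S ≤ ENNReal.ofReal l * volume (hyperplaneProj e '' S) := by
  set T : V → ℝ × (ℝ ∙ e)ᗮ := fun p => (⟪p, e⟫, hyperplaneProj e p)
  have hT : Continuous T := by fun_prop
  have hTinj : Function.Injective T := fun p q hpq =>
    eq_of_hyperplaneProj_eq he (congrArg Prod.snd hpq) (congrArg Prod.fst hpq)
  have hTS : MeasurableSet (T '' S) := (hS.image hT).measurableSet
  have hfiber (y : (ℝ ∙ e)ᗮ) : volume ((fun x => (x, y)) ⁻¹' (T '' S)) ≤
      (hyperplaneProj e '' S).indicator (fun _ => ENNReal.ofReal l) y := by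
    by_cases hy : y ∈ hyperplaneProj e '' S
    · rw [indicator_of_mem hy]
      refine (Real.volume_le_diam _).trans (Metric.ediam_le ?_)
      rintro _ ⟨p, hp, hpx⟩ _ ⟨q, hq, hqx⟩
      obtain ⟨rfl, hpy⟩ := Prod.ext_iff.1 hpx
      obtain ⟨rfl, hqy⟩ := Prod.ext_iff.1 hqx
      rw [edist_dist, Real.dist_eq]
      have hpq := h p hp q hq (hpy.trans hqy.symm)
      have hqp := h q hq p hp (hqy.trans hpy.symm)
      rw [inner_sub_left] at hpq hqp
      exact ENNReal.ofReal_le_ofReal (abs_sub_le_iff.2 ⟨hpq, hqp⟩)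
    · rw [indicator_of_notMem hy, nonpos_iff_eq_zero, preimage_eq_empty, measure_empty]
      rw [disjoint_left]
      rintro _ ⟨p, hp, rfl⟩ ⟨x, hx⟩
      exact hy ⟨p, hp, (congrArg Prod.snd hx).symm⟩
  calc volume S = volume (T ⁻¹' (T '' S)) := by rw [preimage_image_eq S hTinj]
    _ = ∫⁻ y, volume ((fun x => (x, y)) ⁻¹' (T '' S)) := by
        rw [(measurePreserving_inner_hyperplaneProj he).measure_preimage hTS.nullMeasurableSet,
          Measure.prod_apply_symm hTS]
    _ ≤ ∫⁻ y, (hyperplaneProj e '' S).indicator (fun _ => ENNReal.ofReal l) y :=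
        lintegral_mono hfiber
    _ = ENNReal.ofReal l * volume (hyperplaneProj e '' S) :=
        lintegral_indicator_const (hS.image (by fun_prop)).measurableSet _

lemma lintegral_Ioc_ofReal_div_pow {h : ℝ} (hh : 0 < h) (n : ℕ) :
    ∫⁻ z in Ioc 0 h, ENNReal.ofReal ((z / h) ^ n) = ENNReal.ofReal (h / (n + 1)) := by
  rw [← ofReal_integral_eq_lintegral_ofReal, ← intervalIntegral.integral_of_le hh.le]
  · simp_rw [div_pow]
    rw [intervalIntegral.integral_div, integral_pow]
    congr 1
    field_simp
    simp [pow_succ]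
  · exact (Continuous.integrableOn_Icc (by fun_prop)).mono_set Ioc_subset_Icc_self
  · filter_upwards [ae_restrict_mem measurableSet_Ioc] with z hz
    have := hz.1
    positivity

lemma volume_flatCone {e : V} (he : ‖e‖ = 1) {B : Set (ℝ ∙ e)ᗮ} (hB : MeasurableSet B) {h : ℝ}
    (hh : 0 < h) :
    volume (flatCone e h B) = ENNReal.ofReal (h / finrank ℝ V) * volume B := by
  set C : Set (ℝ × (ℝ ∙ e)ᗮ) := {x | x.1 ∈ Ioc 0 h ∧ (h / x.1) • x.2 ∈ B}
  have hC : MeasurableSet C :=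
    (measurable_fst measurableSet_Ioc).inter
      ((by fun_prop : Measurable fun x : ℝ × (ℝ ∙ e)ᗮ => (h / x.1) • x.2) hB)
  have hrank := finrank_eq_finrank_hyperplane_add_one he
  set n := finrank ℝ (ℝ ∙ e)ᗮ
  have hslice (z : ℝ) : volume (Prod.mk z ⁻¹' C) =
      (Ioc 0 h).indicator (fun z => ENNReal.ofReal ((z / h) ^ n) * volume B) z := by
    by_cases hz : z ∈ Ioc 0 h
    · have hz0 : 0 < z := hz.1
      have hCz : Prod.mk z ⁻¹' C = ((h / z) • ·) ⁻¹' B := by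
        ext x
        simp [C, hz.1, hz.2]
      rw [indicator_of_mem hz, hCz, Measure.addHaar_preimage_smul _ (by positivity),
        abs_of_nonneg (by positivity), ← inv_pow, inv_div]
    · have hCz : Prod.mk z ⁻¹' C = ∅ := eq_empty_of_forall_notMem fun x hx => hz hx.1
      rw [indicator_of_notMem hz, hCz, measure_empty]
  calc volume (flatCone e h B) = ∫⁻ z, volume (Prod.mk z ⁻¹' C) := by
        rw [← Measure.prod_apply hC]
        exact (measurePreserving_inner_hyperplaneProj he).measure_preimage hC.nullMeasurableSet
    _ = ENNReal.ofReal (h / finrank ℝ V) * volume B := by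
        simp_rw [hslice]
        rw [lintegral_indicator measurableSet_Ioc, lintegral_mul_const _ (by fun_prop),
          lintegral_Ioc_ofReal_div_pow hh, hrank, Nat.cast_succ]

end Hyperplane

section SupportingHyperplanes

variable {V : Type*} [NormedAddCommGroup V] [InnerProductSpace ℝ V] {K U W : Set V}

lemma inner_lt_of_mem_interior {u p : V} {c : ℝ} (hu : u ≠ 0) (h : ∀ y ∈ K, ⟪y, u⟫ ≤ c)
    (hp : p ∈ interior K) : ⟪p, u⟫ < c := by
  have hopen : IsOpenMap (innerSL ℝ u) :=
    (innerSL ℝ u).isOpenMap_of_ne_zero fun h0 =>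
      hu (inner_self_eq_zero.1 (congr($h0 u) : ⟪u, u⟫ = 0))
  have hK : innerSL ℝ u '' K ⊆ Iic c := by
    rintro _ ⟨y, hy, rfl⟩
    simpa [real_inner_comm] using h y hy
  have hmem := (hopen.image_interior_subset K).trans (interior_mono hK) (mem_image_of_mem _ hp)
  simpa [real_inner_comm] using hmem

/-- The points at which some `u ∈ U` is normal to a hyperplane separating the point from `K`.
Intersected with `K` this is the reverse spherical image of `U`, the set of boundary points with an
outward normal in `U`; intersected with a larger body it is the region lying over that part. -/
def outerSet (K U : Set V) : Set V := {p | ∃ u ∈ U, ∀ y ∈ K, ⟪y - p, u⟫ ≤ 0}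

lemma isClosed_outerSet (hU : IsCompact U) : IsClosed (outerSet K U) := by
  have := isCompact_iff_compactSpace.1 hU
  have hclosed : IsClosed {q : V × U | ∀ y ∈ K, ⟪y - q.1, (q.2 : V)⟫ ≤ 0} := by
    simp only [ofPred_forall]
    exact isClosed_biInter fun y _ => isClosed_le (by fun_prop) continuous_const
  convert isClosedMap_fst_of_compactSpace _ hclosed using 1
  ext p
  simp [outerSet]

lemma outerSet_mono (hUW : U ⊆ W) : outerSet K U ⊆ outerSet K W :=
  fun _ ⟨u, hu, h⟩ => ⟨u, hUW hu, h⟩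

lemma inter_outerSet_subset_frontier (hU : (0 : V) ∉ U) : K ∩ outerSet K U ⊆ frontier K := by
  rintro p ⟨hp, u, hu, h⟩
  refine ⟨subset_closure hp, fun hpi => lt_irrefl ⟪p, u⟫ ?_⟩
  refine inner_lt_of_mem_interior (ne_of_mem_of_not_mem hu hU) (fun y hy => ?_) hpi
  simpa [inner_sub_left] using h y hy

lemma inner_sub_le_of_mem_outerSet {e x y : V} {ε : ℝ} (hU : U ⊆ Metric.closedBall e ε)
    (hx : x ∈ K) (hy : y ∈ outerSet K U) : ⟪x - y, e⟫ ≤ ε * ‖x - y‖ := by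
  obtain ⟨u, hu, h⟩ := hy
  have hue : ‖e - u‖ ≤ ε := by
    rw [← dist_eq_norm']
    exact hU hu
  calc ⟪x - y, e⟫ = ⟪x - y, u⟫ + ⟪x - y, e - u⟫ := by rw [← inner_add_right, add_sub_cancel]
    _ ≤ 0 + ‖x - y‖ * ‖e - u‖ := add_le_add (h x hx) (real_inner_le_norm _ _)
    _ ≤ ε * ‖x - y‖ := by
        rw [zero_add, mul_comm]
        gcongr

/-- The part of the boundary with normals close to `e` is a Lipschitz graph over `eᗮ`. -/
lemma abs_inner_sub_le_of_mem_outerSet {e x y : V} {ε : ℝ} (hU : U ⊆ Metric.closedBall e ε)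
    (hx : x ∈ K ∩ outerSet K U) (hy : y ∈ K ∩ outerSet K U) : |⟪x - y, e⟫| ≤ ε * ‖x - y‖ := by
  rw [abs_le', ← inner_neg_left, neg_sub]
  refine ⟨inner_sub_le_of_mem_outerSet hU hx.1 hy.2, ?_⟩
  rw [norm_sub_rev]
  exact inner_sub_le_of_mem_outerSet hU hy.1 hx.2

lemma exists_unit_normal [CompleteSpace V] (hK : Convex ℝ K) (hK' : (interior K).Nonempty) {p : V}
    (hp : p ∉ interior K) : ∃ u : V, ‖u‖ = 1 ∧ ∀ y ∈ K, ⟪y - p, u⟫ ≤ 0 := by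
  obtain ⟨f, hf⟩ := geometric_hahn_banach_open_point hK.interior isOpen_interior hp
  obtain ⟨v, rfl⟩ := (InnerProductSpace.toDual ℝ V).surjective f
  simp only [InnerProductSpace.toDual_apply_apply] at hf
  obtain ⟨q, hq⟩ := hK'
  have hv : 0 < ‖v‖ := norm_pos_iff.2 <| by
    rintro rfl
    simpa using hf q hq
  refine ⟨‖v‖⁻¹ • v, norm_smul_inv_norm (norm_pos_iff.1 hv), fun y hy => ?_⟩
  have hy' : y ∈ closure (interior K) := by
    rw [hK.closure_interior_eq_closure_of_nonempty_interior ⟨q, hq⟩]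
    exact subset_closure hy
  have hyp : ⟪v, y⟫ ≤ ⟪v, p⟫ :=
    closure_minimal (t := {y | ⟪v, y⟫ ≤ ⟪v, p⟫}) (fun a ha => (hf a ha).le)
      (isClosed_le (by fun_prop) continuous_const) hy'
  rw [real_inner_smul_right, real_inner_comm, inner_sub_right]
  exact mul_nonpos_of_nonneg_of_nonpos (by positivity) (sub_nonpos.2 hyp)

variable [FiniteDimensional ℝ V]

lemma exists_norm_le_mul_norm_orthogonalProjectionOnto (W : Submodule ℝ V) {ι : Type*} [Finite ι]
    {b : ι → V} (hb : Submodule.span ℝ (range b) = Wᗮ) :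
    ∃ C : ℝ, 0 < C ∧ ∃ ε > 0, ∀ d : V, (∀ i, |⟪b i, d⟫| ≤ ε * ‖d‖) →
      ‖d‖ ≤ C * ‖W.orthogonalProjectionOnto d‖ := by
  cases nonempty_fintype ι
  let T : V →ₗ[ℝ] W × (ι → ℝ) :=
    W.orthogonalProjectionOnto.toLinearMap.prod (LinearMap.pi fun i => innerₛₗ ℝ (b i))
  have hT : T.ker = ⊥ := by
    refine (Submodule.eq_bot_iff _).2 fun d hd => ?_
    obtain ⟨hproj, hinner⟩ := Prod.ext_iff.1 hd
    have hdW : d ∈ Wᗮ := Submodule.orthogonalProjectionOnto_eq_zero_iff.1 hproj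
    have hspan : Submodule.span ℝ (range b) ≤ (ℝ ∙ d)ᗮ := by
      rw [Submodule.span_le, range_subset_iff]
      exact fun i => Submodule.mem_orthogonal_singleton_iff_inner_left.2 (congrFun hinner i)
    exact inner_self_eq_zero.1
      (Submodule.mem_orthogonal_singleton_iff_inner_left.1 (hspan (hb ▸ hdW)))
  obtain ⟨C, hC, hanti⟩ := T.exists_antilipschitzWith hT
  have hC' : (0 : ℝ) < C := hC
  refine ⟨C, hC', (2 * C : ℝ)⁻¹, by positivity, fun d hd => ?_⟩
  have hle : ‖d‖ ≤ C * ‖T d‖ := by simpa using hanti.le_mul_dist d 0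
  rcases le_total ‖(T d).2‖ ‖(T d).1‖ with hmax | hmax
  · rwa [Prod.norm_def, max_eq_left hmax] at hle
  · rw [Prod.norm_def, max_eq_right hmax] at hle
    have hT2 : ‖(T d).2‖ ≤ (2 * C : ℝ)⁻¹ * ‖d‖ := (pi_norm_le_iff_of_nonneg (by positivity)).2 hd
    have hd0 : ‖d‖ ≤ ‖d‖ / 2 :=
      calc ‖d‖ ≤ C * ((2 * C : ℝ)⁻¹ * ‖d‖) := hle.trans (by gcongr)
        _ = ‖d‖ / 2 := by field_simp
    have : 0 ≤ C * ‖W.orthogonalProjectionOnto d‖ := by positivity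
    linarith

variable [MeasurableSpace V] [BorelSpace V]

lemma exists_euclideanHausdorffMeasure_eq_zero_of_linearIndependent {u v : V}
    (huv : LinearIndependent ℝ ![u, v]) {n : ℕ} (hn : finrank ℝ V = n + 1) :
    ∃ ε > 0, ∀ S : Set V, (∀ x ∈ S, ∀ y ∈ S, |⟪x - y, u⟫| ≤ ε * ‖x - y‖) →
      (∀ x ∈ S, ∀ y ∈ S, |⟪x - y, v⟫| ≤ ε * ‖x - y‖) → μHE[n] S = 0 := by
  set W : Submodule ℝ V := (Submodule.span ℝ (range ![u, v]))ᗮ with hW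
  obtain ⟨C, hC, ε, hε, h⟩ := exists_norm_le_mul_norm_orthogonalProjectionOnto W
    (Submodule.orthogonal_orthogonal _).symm
  refine ⟨ε, hε, fun S hSu hSv => ?_⟩
  have hfinrank : finrank ℝ W < n := by
    have := (Submodule.span ℝ (range ![u, v])).finrank_add_finrank_orthogonal
    rw [finrank_span_eq_card huv, Fintype.card_fin, hn, ← hW] at this
    omega
  have hzero : (μHE[n] : Measure W) = 0 := by
    rw [Measure.euclideanHausdorffMeasure_def,
      Real.hausdorffMeasure_of_finrank_lt (Nat.cast_lt.2 hfinrank), smul_zero]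
  have hexp : ∀ x ∈ S, ∀ y ∈ S, C⁻¹ * dist x y ≤
      dist (W.orthogonalProjectionOnto x) (W.orthogonalProjectionOnto y) := fun x hx y hy => by
    rw [dist_eq_norm, dist_eq_norm, ← map_sub, inv_mul_le_iff₀ hC]
    refine h (x - y) fun i => ?_
    rw [real_inner_comm]
    fin_cases i
    · exact hSu x hx y hy
    · exact hSv x hx y hy
  have hle := ofReal_pow_mul_euclideanHausdorffMeasure_le (inv_pos.2 hC) hexp n
  rw [hzero, Measure.coe_zero, Pi.zero_apply, nonpos_iff_eq_zero, mul_eq_zero] at hle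
  exact hle.resolve_left (pow_ne_zero n (ENNReal.ofReal_pos.2 (inv_pos.2 hC)).ne')

end SupportingHyperplanes

section GaussMap

variable {m : ℕ} {K : Set (Euc m)} {x u v : Euc m}

lemma zero_notMem_unitSphere : (0 : Euc m) ∉ unitSphere m := by
  simp [unitSphere]

lemma isCompact_unitSphere : IsCompact (unitSphere m) := isCompact_sphere 0 1

lemma IsOutwardNormalAt.mem_unitSphere (hu : IsOutwardNormalAt K x u) : u ∈ unitSphere m :=
  mem_sphere_zero_iff_norm.2 hu.2.1

lemma IsConvexBody.frontier_subset (hK : IsConvexBody K) : frontier K ⊆ K :=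
  hK.2.1.isClosed.frontier_subset

lemma IsConvexBody.linearIndependent_of_isOutwardNormalAt (hK : IsConvexBody K) (huv : u ≠ v)
    (hu : IsOutwardNormalAt K x u) (hv : IsOutwardNormalAt K x v) :
    LinearIndependent ℝ ![u, v] := by
  have hu0 : u ≠ 0 := norm_ne_zero_iff.1 (hu.2.1 ▸ one_ne_zero)
  rw [LinearIndependent.pair_iff' hu0]
  rintro a rfl
  have ha : |a| = 1 := by simpa [norm_smul, hu.2.1] using hv.2.1
  rcases eq_or_eq_neg_of_abs_eq ha with rfl | rfl
  · exact huv (one_smul ℝ u).symm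
  · obtain ⟨q, hq⟩ := hK.2.2
    have hlt : ⟪q, u⟫ < ⟪x, u⟫ := inner_lt_of_mem_interior hu0
      (fun y hy => by simpa [inner_sub_left] using hu.2.2 y hy) hq
    have hge := hv.2.2 q (interior_subset hq)
    rw [neg_one_smul, inner_neg_right, inner_sub_left] at hge
    linarith

/-- The boundary points with more than one outward unit normal, where the value of `gaussMap` is an
arbitrary choice. -/
def singularSet (K : Set (Euc m)) : Set (Euc m) :=
  {x | ∃ u v, u ≠ v ∧ IsOutwardNormalAt K x u ∧ IsOutwardNormalAt K x v}

lemma IsConvexBody.isOutwardNormalAt_gaussMap (hK : IsConvexBody K) (hx : x ∈ frontier K) :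
    IsOutwardNormalAt K x (gaussMap K x) := by
  have h : ∃ u, IsOutwardNormalAt K x u :=
    (exists_unit_normal hK.1 hK.2.2 hx.2).imp fun _ hu => ⟨hx, hu⟩
  rw [gaussMap, dif_pos h]
  exact h.choose_spec

lemma IsConvexBody.gaussMap_mem_iff (hK : IsConvexBody K) (hx : x ∈ frontier K)
    (hxs : x ∉ singularSet K) (U : Set (Euc m)) :
    gaussMap K x ∈ U ↔ x ∈ K ∩ outerSet K (U ∩ unitSphere m) := by
  have hg := hK.isOutwardNormalAt_gaussMap hx
  refine ⟨fun h => ⟨hK.frontier_subset hx, _, ⟨h, hg.mem_unitSphere⟩, hg.2.2⟩, ?_⟩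
  rintro ⟨-, u, ⟨huU, hu⟩, h⟩
  have hgu : gaussMap K x = u := by
    by_contra hne
    exact hxs ⟨_, _, hne, hg, hx, mem_sphere_zero_iff_norm.1 hu, h⟩
  rwa [hgu]

end GaussMap

section AreaMeasure

variable {n : ℕ} {K : Set (Euc (n + 1))}

lemma IsConvexBody.euclideanHausdorffMeasure_singularSet (hK : IsConvexBody K) :
    μHE[n] (singularSet K) = 0 := by
  have hnull (p : Euc (n + 1) × Euc (n + 1)) : ∃ ε > 0, LinearIndependent ℝ ![p.1, p.2] →
      μHE[n] (K ∩ outerSet K (Metric.closedBall p.1 ε) ∩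
        (K ∩ outerSet K (Metric.closedBall p.2 ε))) = 0 := by
    by_cases hp : LinearIndependent ℝ ![p.1, p.2]
    · obtain ⟨ε, hε, h⟩ := exists_euclideanHausdorffMeasure_eq_zero_of_linearIndependent hp
        finrank_euclideanSpace_fin
      exact ⟨ε, hε, fun _ => h _
        (fun x hx y hy => abs_inner_sub_le_of_mem_outerSet subset_rfl hx.1 hy.1)
        (fun x hx y hy => abs_inner_sub_le_of_mem_outerSet subset_rfl hx.2 hy.2)⟩
    · exact ⟨1, one_pos, fun h => absurd h hp⟩
  choose ε hε hnull using hnull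
  obtain ⟨t, htind, htc, ht⟩ := TopologicalSpace.countable_cover_nhdsWithin
    (s := {p : Euc (n + 1) × Euc (n + 1) | LinearIndependent ℝ ![p.1, p.2]})
    fun p _ => mem_nhdsWithin_of_mem_nhds (Metric.closedBall_mem_nhds p (hε p))
  refine measure_mono_null ?_ ((measure_biUnion_null_iff htc).2 fun p hp => hnull p (htind hp))
  rintro x ⟨u, v, huv, hu, hv⟩
  have hx : x ∈ K := hK.frontier_subset hu.1
  obtain ⟨p, hp, huvp⟩ :=
    mem_iUnion₂.1 (ht (show (u, v) ∈ _ from hK.linearIndependent_of_isOutwardNormalAt huv hu hv))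
  rw [← closedBall_prod_same] at huvp
  exact mem_iUnion₂.2 ⟨p, hp, ⟨hx, u, huvp.1, hu.2.2⟩, hx, v, huvp.2, hv.2.2⟩

lemma IsConvexBody.gaussMap_preimage_ae_eq (hK : IsConvexBody K) (U : Set (Euc (n + 1))) :
    gaussMap K ⁻¹' U =ᵐ[(μHE[n]).restrict (frontier K)]
      (K ∩ outerSet K (U ∩ unitSphere (n + 1)) : Set (Euc (n + 1))) := by
  have hns : ∀ᵐ x ∂(μHE[n]).restrict (frontier K), x ∉ singularSet K :=
    ae_restrict_of_ae (measure_eq_zero_iff_ae_notMem.1 hK.euclideanHausdorffMeasure_singularSet)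
  filter_upwards [ae_restrict_mem isClosed_frontier.measurableSet, hns] with x hx hxs
  exact propext (hK.gaussMap_mem_iff hx hxs U)

lemma IsConvexBody.isClosed_inter_outerSet (hK : IsConvexBody K) {U : Set (Euc (n + 1))}
    (hU : IsClosed U) (hUs : U ⊆ unitSphere (n + 1)) : IsClosed (K ∩ outerSet K U) :=
  hK.2.1.isClosed.inter (isClosed_outerSet (isCompact_unitSphere.of_isClosed_subset hU hUs))

lemma IsConvexBody.aemeasurable_gaussMap (hK : IsConvexBody K) :
    AEMeasurable (gaussMap K) ((μHE[n]).restrict (frontier K)) := by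
  suffices h : NullMeasurable (gaussMap K) ((μHE[n]).restrict (frontier K)) from h.aemeasurable
  refine measurable_of_isClosed (γ := Euc (n + 1)) fun F hF => ?_
  have hclosed := hK.isClosed_inter_outerSet (hF.inter isCompact_unitSphere.isClosed)
    inter_subset_right
  exact hclosed.nullMeasurableSet.congr (hK.gaussMap_preimage_ae_eq F).symm

/-- The surface area measure normalised through `μHE[n]`, which is Lebesgue measure on
hyperplanes. It differs from `surfMeasure K` by a constant factor. -/
def areaMeasure (K : Set (Euc (n + 1))) : Measure (Euc (n + 1)) :=
  ((μHE[n]).restrict (frontier K)).map (gaussMap K)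

lemma areaMeasure_eq_smul_surfMeasure (K : Set (Euc (n + 1))) :
    areaMeasure K = (volume : Measure (EuclideanSpace ℝ (Fin n))).addHaarScalarFactor μH[n] •
      surfMeasure K := by
  rw [areaMeasure, surfMeasure, Measure.euclideanHausdorffMeasure_def, Measure.restrict_smul,
    Measure.map_smul, Nat.cast_succ, add_sub_cancel_right]

lemma IsConvexBody.areaMeasure_apply (hK : IsConvexBody K) {U : Set (Euc (n + 1))}
    (hU : IsClosed U) (hUs : U ⊆ unitSphere (n + 1)) :
    areaMeasure K U = μHE[n] (K ∩ outerSet K U) := by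
  have hsub : K ∩ outerSet K U ⊆ frontier K :=
    inter_outerSet_subset_frontier fun h => zero_notMem_unitSphere (hUs h)
  rw [areaMeasure, Measure.map_apply_of_aemeasurable hK.aemeasurable_gaussMap hU.measurableSet,
    measure_congr (hK.gaussMap_preimage_ae_eq U), inter_eq_left.2 hUs,
    Measure.restrict_apply (hK.isClosed_inter_outerSet hU hUs).measurableSet,
    inter_eq_left.2 hsub]

lemma IsConvexBody.areaMeasure_compl_unitSphere (hK : IsConvexBody K) :
    areaMeasure K (unitSphere (n + 1))ᶜ = 0 := by
  rw [areaMeasure, Measure.map_apply_of_aemeasurable hK.aemeasurable_gaussMap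
    isCompact_unitSphere.isClosed.measurableSet.compl]
  refine (ae_restrict_iff' isClosed_frontier.measurableSet).2 <| .of_forall fun x hx => ?_
  exact (hK.isOutwardNormalAt_gaussMap hx).mem_unitSphere

lemma IsConvexBody.isFiniteMeasure_areaMeasure (hK : IsConvexBody K) :
    IsFiniteMeasure (areaMeasure K) := by
  refine ⟨?_⟩
  rw [measure_congr (t := unitSphere (n + 1))]
  · refine isCompact_unitSphere.measure_lt_top_of_nhdsWithin fun e he =>
      ⟨unitSphere (n + 1) ∩ Metric.closedBall e (1 / 2), inter_mem_nhdsWithin _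
        (Metric.closedBall_mem_nhds e (by norm_num)), ?_⟩
    have he1 : ‖e‖ = 1 := mem_sphere_zero_iff_norm.1 he
    rw [hK.areaMeasure_apply (isCompact_unitSphere.isClosed.inter Metric.isClosed_closedBall)
      inter_subset_left]
    set B := K ∩ outerSet K (unitSphere (n + 1) ∩ Metric.closedBall e (1 / 2))
    have hproj : ∀ x ∈ B, ∀ y ∈ B,
        1 / 2 * dist x y ≤ dist (hyperplaneProj e x) (hyperplaneProj e y) := fun x hx y hy => by
      rw [dist_eq_norm, dist_eq_norm, ← map_sub]
      linarith [norm_le_norm_hyperplaneProj_add he1 (x - y),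
        abs_inner_sub_le_of_mem_outerSet inter_subset_right hx hy]
    have hle := ofReal_pow_mul_euclideanHausdorffMeasure_le (by norm_num) hproj n
    rw [euclideanHausdorffMeasure_hyperplane finrank_euclideanSpace_fin he1] at hle
    have hfin : volume (hyperplaneProj e '' B) < ∞ :=
      (measure_mono (image_mono inter_subset_left)).trans_lt
        (hK.2.1.image (by fun_prop)).measure_lt_top
    refine lt_top_iff_ne_top.2 fun htop => (hle.trans_lt hfin).ne ?_
    rw [htop, ENNReal.mul_top (by simp)]
  · exact (Filter.eventuallyEq_univ.2 hK.areaMeasure_compl_unitSphere).symm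

end AreaMeasure

section SupportFunction

variable {V : Type*} [NormedAddCommGroup V]

/-- `L` is compact, contains the ball of radius `ρ > 0` about the origin and is contained in the
ball of radius `R` about the origin: `L` is compact with `0` in its interior, with constants. -/
structure IsBetweenBalls (L : Set V) (ρ R : ℝ) : Prop where
  isCompact : IsCompact L
  pos : 0 < ρ
  closedBall_subset : Metric.closedBall 0 ρ ⊆ L
  subset_closedBall : L ⊆ Metric.closedBall 0 R

variable {L : Set V} {x : V} {ρ R : ℝ}

lemma exists_isBetweenBalls (hL : IsCompact L) (h0 : 0 ∈ interior L) :
    ∃ ρ R, IsBetweenBalls L ρ R := by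
  obtain ⟨ρ, hρ, hρL⟩ := Metric.nhds_basis_closedBall.mem_iff.1 (mem_interior_iff_mem_nhds.1 h0)
  obtain ⟨R, hR⟩ := hL.isBounded.subset_closedBall 0
  exact ⟨ρ, R, hL, hρ, hρL, hR⟩

lemma IsBetweenBalls.zero_mem (hL : IsBetweenBalls L ρ R) : 0 ∈ L :=
  hL.closedBall_subset (Metric.mem_closedBall_self hL.pos.le)

lemma IsBetweenBalls.norm_le (hL : IsBetweenBalls L ρ R) (hx : x ∈ L) : ‖x‖ ≤ R :=
  mem_closedBall_zero_iff.1 (hL.subset_closedBall hx)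

variable [InnerProductSpace ℝ V]

/-- The support function of the set `L`, with the junk value `0` where the supremum is infinite. -/
def supportFn (L : Set V) (u : V) : ℝ := sSup ((fun y => ⟪y, u⟫) '' L)

namespace IsBetweenBalls

variable {U : Set V} {e u v : V} {δ ε : ℝ} (hL : IsBetweenBalls L ρ R)
include hL

lemma smul_mem (hu : ‖u‖ = 1) : ρ • u ∈ L :=
  hL.closedBall_subset (by simp [norm_smul, hu, abs_of_pos hL.pos])

lemma radius_le_radius (hu : ‖u‖ = 1) : ρ ≤ R := by
  simpa [norm_smul, hu, abs_of_pos hL.pos] using hL.norm_le (hL.smul_mem hu)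

lemma le_of_mul_le_mul (he : ‖e‖ = 1) (hδ : 0 ≤ δ) (hε : R * ε ≤ δ * ρ) : ε ≤ δ := by
  have hρR := hL.radius_le_radius he
  exact _root_.le_of_mul_le_mul_left (hε.trans (by rw [mul_comm]; gcongr)) (hL.pos.trans_le hρR)

lemma isGreatest_supportFn (u : V) : IsGreatest ((fun y => ⟪y, u⟫) '' L) (supportFn L u) :=
  (hL.isCompact.image (by fun_prop)).isGreatest_sSup ((nonempty_of_mem hL.zero_mem).image _)

lemma inner_le_supportFn (hx : x ∈ L) (u : V) : ⟪x, u⟫ ≤ supportFn L u :=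
  (hL.isGreatest_supportFn u).2 (mem_image_of_mem _ hx)

lemma supportFn_eq_inner (hx : x ∈ L) (h : ∀ y ∈ L, ⟪y - x, u⟫ ≤ 0) : supportFn L u = ⟪x, u⟫ := by
  refine (hL.isGreatest_supportFn u).unique ⟨mem_image_of_mem _ hx, ?_⟩
  rintro _ ⟨y, hy, rfl⟩
  simpa [inner_sub_left] using h y hy

lemma le_supportFn (hu : ‖u‖ = 1) : ρ ≤ supportFn L u := by
  simpa [real_inner_smul_left, hu] using hL.inner_le_supportFn (hL.smul_mem hu) u

lemma inner_le_inner_add (hx : x ∈ L) (u v : V) : ⟪x, u⟫ ≤ ⟪x, v⟫ + R * ‖u - v‖ := by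
  calc ⟪x, u⟫ = ⟪x, v⟫ + ⟪x, u - v⟫ := by rw [← inner_add_right, add_sub_cancel]
    _ ≤ ⟪x, v⟫ + R * ‖u - v‖ := by
        gcongr
        exact (real_inner_le_norm _ _).trans (by gcongr; exact hL.norm_le hx)

lemma supportFn_le_add (u v : V) : supportFn L u ≤ supportFn L v + R * ‖u - v‖ := by
  obtain ⟨x, hx, hxu⟩ := (hL.isGreatest_supportFn u).1
  rw [← hxu]
  exact (hL.inner_le_inner_add hx u v).trans (by gcongr; exact hL.inner_le_supportFn hx v)

lemma continuous_supportFn : Continuous (supportFn L) := by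
  have hR : 0 ≤ R := by simpa using hL.norm_le hL.zero_mem
  refine (LipschitzWith.of_le_add_mul (Real.toNNReal R) fun u v => ?_).continuous
  rw [Real.coe_toNNReal R hR, dist_eq_norm]
  exact hL.supportFn_le_add u v

lemma supportFn_le_one_add_mul (hv : ‖v‖ = 1) (hδ : 0 ≤ δ) (huv : R * ‖u - v‖ ≤ δ * ρ) :
    supportFn L u ≤ (1 + δ) * supportFn L v := by
  have := mul_le_mul_of_nonneg_left (hL.le_supportFn hv) hδ
  linarith [hL.supportFn_le_add u v]

lemma le_inner_of_mem_outerSet (hU : U ⊆ Metric.closedBall e ε) (hx : x ∈ L ∩ outerSet L U) :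
    supportFn L e - 2 * (R * ε) ≤ ⟪x, e⟫ := by
  obtain ⟨hxL, u, hu, hxu⟩ := hx
  have hR : 0 ≤ R := (norm_nonneg x).trans (hL.norm_le hxL)
  have hue : R * ‖u - e‖ ≤ R * ε := by
    gcongr
    rw [← dist_eq_norm]
    exact hU hu
  have hsupp := hL.supportFn_le_add e u
  have hinner := hL.inner_le_inner_add hxL u e
  rw [hL.supportFn_eq_inner hxL hxu, norm_sub_rev] at hsupp
  linarith

lemma inner_pos_of_normal (hu : ‖u‖ = 1) (h : ∀ y ∈ L, ⟪y - x, u⟫ ≤ 0) : 0 < ⟪x, u⟫ := by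
  have hle := h (ρ • u) (hL.smul_mem hu)
  rw [inner_sub_left, real_inner_smul_left, real_inner_self_eq_norm_sq, hu] at hle
  linarith [hL.pos]

end IsBetweenBalls

end SupportFunction

section Cones

variable {V : Type*} [NormedAddCommGroup V] [InnerProductSpace ℝ V] {L U B B' : Set V} {e x y : V}
  {ρ R δ ε h H κ : ℝ}

lemma IsBetweenBalls.injOn_smul (hL : IsBetweenBalls L ρ R) :
    InjOn (fun q : ℝ × V => q.1 • q.2) (Ioc 0 1 ×ˢ (L ∩ outerSet L (Metric.sphere 0 1))) := by
  have hle {s s' : ℝ} {x x' : V} (hs' : 0 < s') (hx : x ∈ outerSet L (Metric.sphere 0 1))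
      (hx' : x' ∈ L) (heq : s • x = s' • x') : s ≤ s' := by
    obtain ⟨u, hu, hxu⟩ := hx
    refine le_of_mul_le_mul_right ?_ (hL.inner_pos_of_normal (mem_sphere_zero_iff_norm.1 hu) hxu)
    calc s * ⟪x, u⟫ = s' * ⟪x', u⟫ := by rw [← real_inner_smul_left, heq, real_inner_smul_left]
      _ ≤ s' * ⟪x, u⟫ := by
          gcongr
          simpa [inner_sub_left] using hxu x' hx'
  rintro ⟨s, x⟩ ⟨hs, hx⟩ ⟨s', x'⟩ ⟨hs', hx'⟩ heq
  obtain rfl : s = s' :=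
    le_antisymm (hle hs'.1 hx.2 hx'.1 heq) (hle hs.1 hx'.2 hx.1 heq.symm)
  exact Prod.ext rfl (smul_right_injective V hs.1.ne' heq)

lemma IsBetweenBalls.disjoint_cone (hL : IsBetweenBalls L ρ R)
    (hB : B ⊆ L ∩ outerSet L (Metric.sphere 0 1)) (hB' : B' ⊆ L ∩ outerSet L (Metric.sphere 0 1))
    (h : Disjoint B B') : Disjoint (Ioc (0 : ℝ) 1 • B) (Ioc (0 : ℝ) 1 • B') := by
  rw [disjoint_iff_inter_eq_empty, ← image_smul_prod, ← image_smul_prod,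
    ← hL.injOn_smul.image_inter (prod_mono_right hB) (prod_mono_right hB'), prod_inter_prod,
    h.inter_eq, prod_empty, image_empty]

lemma mul_dist_le_dist_radialProj (he : ‖e‖ = 1) (hh : 0 < h) (hx : ⟪x, e⟫ ∈ Icc h H)
    (hy : h ≤ ⟪y, e⟫) (hyR : ‖y‖ ≤ R) (hxy : |⟪x - y, e⟫| ≤ ε * ‖x - y‖) :
    (h / H * (1 - ε) - R * ε / h) * dist x y ≤ dist (radialProj e h x) (radialProj e h y) := by
  have hx0 : 0 < ⟪x, e⟫ := hh.trans_le hx.1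
  have hy0 : 0 < ⟪y, e⟫ := hh.trans_le hy
  have hproj : (1 - ε) * ‖x - y‖ ≤ ‖hyperplaneProj e (x - y)‖ := by
    linarith [norm_le_norm_hyperplaneProj_add he (x - y)]
  have hradial : h / H * ((1 - ε) * ‖x - y‖) ≤ h / ⟪x, e⟫ * ‖hyperplaneProj e (x - y)‖ :=
    calc h / H * ((1 - ε) * ‖x - y‖) ≤ h / H * ‖hyperplaneProj e (x - y)‖ := by
          have := hx0.trans_le hx.2
          gcongr
      _ ≤ h / ⟪x, e⟫ * ‖hyperplaneProj e (x - y)‖ := by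
          gcongr
          exact hx.2
  have hheight : |h / ⟪y, e⟫ - h / ⟪x, e⟫| * ‖hyperplaneProj e y‖ ≤ R * ε / h * ‖x - y‖ :=
    calc |h / ⟪y, e⟫ - h / ⟪x, e⟫| * ‖hyperplaneProj e y‖
        = h / ⟪x, e⟫ * (|⟪x - y, e⟫| / ⟪y, e⟫) * ‖hyperplaneProj e y‖ := by
          have hdiff : h / ⟪y, e⟫ - h / ⟪x, e⟫ = h / ⟪x, e⟫ * (⟪x - y, e⟫ / ⟪y, e⟫) := by
            rw [inner_sub_left]
            field_simp
          rw [hdiff, abs_mul, abs_div ⟪x - y, e⟫, abs_of_pos hy0, abs_of_pos (div_pos hh hx0)]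
      _ ≤ 1 * (ε * ‖x - y‖ / h) * R := by
          have := (norm_hyperplaneProj_le e y).trans hyR
          have := (abs_nonneg _).trans hxy
          gcongr
          exact (div_le_one hx0).2 hx.1
      _ = R * ε / h * ‖x - y‖ := by ring
  have hsplit : radialProj e h x - radialProj e h y =
      (h / ⟪x, e⟫) • hyperplaneProj e (x - y) -
        (h / ⟪y, e⟫ - h / ⟪x, e⟫) • hyperplaneProj e y := by
    simp only [radialProj, map_sub, smul_sub, sub_smul]
    abel
  have htri := norm_sub_norm_le ((h / ⟪x, e⟫) • hyperplaneProj e (x - y))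
    ((h / ⟪y, e⟫ - h / ⟪x, e⟫) • hyperplaneProj e y)
  rw [norm_smul, norm_smul, Real.norm_eq_abs, Real.norm_eq_abs, abs_of_pos (div_pos hh hx0)] at htri
  rw [dist_eq_norm, dist_eq_norm, hsplit]
  linarith

lemma flatCone_radialProj_subset (he : ‖e‖ = 1) (hh : 0 < h) (hB : ∀ x ∈ B, h ≤ ⟪x, e⟫) :
    flatCone e h (radialProj e h '' B) ⊆ Ioc (0 : ℝ) 1 • B := by
  rintro p ⟨⟨hp0, hph⟩, x, hx, hxp⟩
  have hx0 : 0 < ⟪x, e⟫ := hh.trans_le (hB x hx)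
  refine ⟨⟪p, e⟫ / ⟪x, e⟫, ⟨by positivity, (div_le_one hx0).2 (hph.trans (hB x hx))⟩, x, hx, ?_⟩
  refine eq_of_hyperplaneProj_eq he ?_ ?_
  · calc hyperplaneProj e ((⟪p, e⟫ / ⟪x, e⟫) • x) = (⟪p, e⟫ / h) • radialProj e h x := by
          rw [map_smul, radialProj, smul_smul]
          congr 1
          field_simp
      _ = hyperplaneProj e p := by
          rw [hxp, radialProj, smul_smul, div_mul_div_cancel₀ hh.ne', div_self hp0.ne', one_smul]
  · simp only [real_inner_smul_left]
    exact div_mul_cancel₀ _ hx0.ne'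

variable [FiniteDimensional ℝ V] [MeasurableSpace V] [BorelSpace V] {n : ℕ}

lemma IsBetweenBalls.measurableSet_cone (hL : IsBetweenBalls L ρ R)
    (hB : B ⊆ L ∩ outerSet L (Metric.sphere 0 1)) (hBm : MeasurableSet B) :
    MeasurableSet (Ioc (0 : ℝ) 1 • B) := by
  rw [← image_smul_prod]
  exact (measurableSet_Ioc.prod hBm).image_of_continuousOn_injOn (by fun_prop)
    (hL.injOn_smul.mono (prod_mono_right hB))

lemma mul_euclideanHausdorffMeasure_le_volume_cone_of_mul_dist_le (hn : finrank ℝ V = n + 1)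
    (he : ‖e‖ = 1) (hh : 0 < h) (hκ : 0 < κ) (hB : MeasurableSet B) (hBh : ∀ x ∈ B, h ≤ ⟪x, e⟫)
    (hBκ : ∀ x ∈ B, ∀ y ∈ B, κ * dist x y ≤ dist (radialProj e h x) (radialProj e h y)) :
    ENNReal.ofReal (κ ^ n * h) * μHE[n] B ≤ (n + 1) * volume (Ioc (0 : ℝ) 1 • B) := by
  have hinj : InjOn (radialProj e h) B := fun x hx y hy hxy => by
    have hdist := hBκ x hx y hy
    rw [hxy, dist_self] at hdist
    exact dist_le_zero.1 (nonpos_of_mul_nonpos_right hdist hκ)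
  have hcont : ContinuousOn (radialProj e h) B := by
    have hne (x) (hx : x ∈ B) : ⟪x, e⟫ ≠ 0 := (hh.trans_le (hBh x hx)).ne'
    unfold radialProj
    fun_prop (disch := assumption)
  calc ENNReal.ofReal (κ ^ n * h) * μHE[n] B
      = ENNReal.ofReal h * (ENNReal.ofReal κ ^ n * μHE[n] B) := by
        rw [mul_comm (κ ^ n), ENNReal.ofReal_mul hh.le, ENNReal.ofReal_pow hκ.le, mul_assoc]
    _ ≤ ENNReal.ofReal h * volume (radialProj e h '' B) := by
        gcongr
        rw [← euclideanHausdorffMeasure_hyperplane hn he]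
        exact ofReal_pow_mul_euclideanHausdorffMeasure_le hκ hBκ n
    _ = (n + 1) * (ENNReal.ofReal (h / finrank ℝ V) * volume (radialProj e h '' B)) := by
        rw [← mul_assoc, hn, ENNReal.ofReal_div_of_pos (by positivity), ENNReal.ofReal_natCast,
          Nat.cast_succ, ENNReal.mul_div_cancel (by simp) (by finiteness)]
    _ ≤ (n + 1) * volume (Ioc (0 : ℝ) 1 • B) := by
        rw [← volume_flatCone he (hB.image_of_continuousOn_injOn hcont hinj) hh]
        gcongr
        exact flatCone_radialProj_subset he hh hBh

lemma IsBetweenBalls.mul_euclideanHausdorffMeasure_le_volume_cone (hL : IsBetweenBalls L ρ R)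
    (hn : finrank ℝ V = n + 1) (he : ‖e‖ = 1) (hδ : 0 < δ) (hδ' : δ < 1 / 5) (hε : R * ε ≤ δ * ρ)
    (hU : U ⊆ Metric.closedBall e ε) (hB : MeasurableSet B) (hBU : B ⊆ L ∩ outerSet L U) :
    ENNReal.ofReal ((1 - 5 * δ) ^ (n + 1) * supportFn L e) * μHE[n] B ≤
      (n + 1) * volume (Ioc (0 : ℝ) 1 • B) := by
  have hρ : ρ ≤ supportFn L e := hL.le_supportFn he
  have hρ0 := hL.pos
  set H := supportFn L e
  set h := H - 2 * (R * ε)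
  have hδρ : δ * ρ ≤ δ * H := by gcongr
  have hh : (1 - 2 * δ) * H ≤ h := by linarith
  have hρh : ρ ≤ 2 * h := by nlinarith
  have hh0 : 0 < h := by linarith
  have hεδ : ε ≤ δ := hL.le_of_mul_le_mul he hδ.le hε
  have hκ : 1 - 5 * δ ≤ h / H * (1 - ε) - R * ε / h := by
    have hH : 1 - 2 * δ ≤ h / H := (le_div_iff₀ (hρ0.trans_le hρ)).2 hh
    have hR : R * ε / h ≤ 2 * δ := (div_le_iff₀ hh0).2 (by nlinarith)
    nlinarith
  have hBh (x) (hx : x ∈ B) : h ≤ ⟪x, e⟫ := hL.le_inner_of_mem_outerSet hU (hBU hx)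
  refine le_trans ?_ (mul_euclideanHausdorffMeasure_le_volume_cone_of_mul_dist_le
    (κ := 1 - 5 * δ) hn he hh0 (by linarith) hB hBh fun x hx y hy => ?_)
  · gcongr ENNReal.ofReal ?_ * _
    rw [pow_succ, mul_assoc]
    have hpow : 0 ≤ (1 - 5 * δ) ^ n := pow_nonneg (by linarith) n
    gcongr
    nlinarith
  · refine le_trans (by gcongr) (mul_dist_le_dist_radialProj (R := R) he hh0
      ⟨hBh x hx, hL.inner_le_supportFn (hBU hx).1 e⟩ (hBh y hy) (hL.norm_le (hBU hy).1)
      (abs_inner_sub_le_of_mem_outerSet hU (hBU hx) (hBU hy)))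

end Cones

section FineCovers

variable {X : Type*} [MetricSpace X] [MeasurableSpace X]

/-- A decomposition of `S`, up to null sets, into finitely many closed pieces `U i`, each within
distance `ε` of its centre `e i ∈ S`. -/
structure IsFineCover (μ : Measure X) (S : Set X) (ε : ℝ) {k : ℕ} (e : Fin k → X)
    (U : Fin k → Set X) : Prop where
  center_mem : ∀ i, e i ∈ S
  isClosed : ∀ i, IsClosed (U i)
  subset : ∀ i, U i ⊆ S
  subset_closedBall : ∀ i, U i ⊆ Metric.closedBall (e i) ε
  subset_iUnion : S ⊆ ⋃ i, U i
  aedisjoint : Pairwise (Function.onFun (AEDisjoint μ) U)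

variable {μ : Measure X} {S : Set X} {ε : ℝ} {k : ℕ} {e : Fin k → X}
  {U : Fin k → Set X}

lemma IsFineCover.isCompact (h : IsFineCover μ S ε e U) (hS : IsCompact S) (i : Fin k) :
    IsCompact (U i) :=
  hS.of_isClosed_subset (h.isClosed i) (h.subset i)

variable [BorelSpace X]

lemma exists_isFineCover (μ : Measure X) [SFinite μ] (hS : IsCompact S) (hε : 0 < ε) :
    ∃ (k : ℕ) (e : Fin k → X) (U : Fin k → Set X), IsFineCover μ S ε e U := by
  have hr (x : X) : ∃ r ∈ Ioo 0 ε, μ (frontier (Metric.ball x r)) = 0 := by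
    simpa only [Metric.thickening_singleton] using exists_null_frontier_thickening μ {x} hε
  choose r hr hrμ using hr
  obtain ⟨t, ht, htS⟩ := hS.elim_nhds_subcover (fun x => Metric.ball x (r x))
    fun x _ => Metric.ball_mem_nhds x (hr x).1
  let e (i : Fin t.card) : X := t.equivFin.symm i
  let D (i : Fin t.card) : Set X := Metric.ball (e i) (r (e i))
  refine ⟨t.card, e, fun i => (closure (D i) ∩ S) \ ⋃ j ∈ Iio i, D j,
    fun i => ht _ (t.equivFin.symm i).2, fun i => ?_, fun i x hx => hx.1.2, fun i x hx => ?_,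
    fun x hx => ?_, ?_⟩
  · exact (isClosed_closure.inter hS.isClosed).sdiff
      (isOpen_biUnion fun _ _ => Metric.isOpen_ball)
  · exact Metric.closedBall_subset_closedBall (hr _).2.le
      (Metric.closure_ball_subset_closedBall hx.1.1)
  · have hex : ∃ i, x ∈ D i := by
      obtain ⟨y, hy, hxy⟩ := mem_iUnion₂.1 (htS hx)
      exact ⟨t.equivFin ⟨y, hy⟩, by simpa [D, e] using hxy⟩
    obtain ⟨i, hi, hmin⟩ := WellFounded.has_min (wellFounded_lt (α := Fin t.card)) {i | x ∈ D i} hex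
    refine mem_iUnion.2 ⟨i, ⟨subset_closure hi, hx⟩, fun h => ?_⟩
    obtain ⟨j, hji, hxj⟩ := mem_iUnion₂.1 h
    exact hmin j hxj hji
  · refine (Std.Symm.pairwise_on _).2 fun i j hij => measure_mono_null ?_ (hrμ (e i))
    rw [Metric.isOpen_ball.frontier_eq]
    exact fun x hx => ⟨hx.1.1.1, fun h => hx.2.2 (mem_biUnion hij h)⟩

lemma IsFineCover.lintegral_eq_sum (h : IsFineCover μ S ε e U) (hS : μ Sᶜ = 0) (f : X → ℝ≥0∞) :
    ∫⁻ x, f x ∂μ = ∑ i, ∫⁻ x in U i, f x ∂μ := by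
  have hae : ∀ᵐ x ∂μ, x ∈ ⋃ i, U i := by
    filter_upwards [measure_eq_zero_iff_ae_notMem.1 hS] with x hx
    exact h.subset_iUnion (not_notMem.1 hx)
  have hU (i : Fin k) : NullMeasurableSet (U i) μ := (h.isClosed i).nullMeasurableSet
  rw [← Measure.restrict_eq_self_of_ae_mem hae, lintegral_iUnion₀ hU h.aedisjoint, tsum_fintype,
    Measure.restrict_eq_self_of_ae_mem hae]

end FineCovers

section MixedVolume

lemma le_of_eventually_ofReal_mul_le {f : ℝ → ℝ} {x y : ℝ≥0∞} (hf : ContinuousAt f 0)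
    (hf0 : f 0 = 1) (h : ∀ᶠ δ in 𝓝[>] 0, ENNReal.ofReal (f δ) * x ≤ y) : x ≤ y := by
  have hlim : Filter.Tendsto (fun δ => ENNReal.ofReal (f δ)) (𝓝[>] 0) (𝓝 1) := by
    simpa [hf0] using ENNReal.tendsto_ofReal (hf.tendsto.mono_left nhdsWithin_le_nhds)
  simpa using le_of_tendsto (ENNReal.Tendsto.mul_const hlim (Or.inl one_ne_zero)) h

variable {V : Type*} [NormedAddCommGroup V] [InnerProductSpace ℝ V] [MeasurableSpace V]
  {L U B : Set V} {e : V} {ρ R δ ε : ℝ} {μ : Measure V}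

lemma IsBetweenBalls.setLIntegral_supportFn_le (hL : IsBetweenBalls L ρ R) (he : ‖e‖ = 1)
    (hδ : 0 ≤ δ) (hε : R * ε ≤ δ * ρ) (hU : U ⊆ Metric.closedBall e ε) :
    ∫⁻ u in U, ENNReal.ofReal (supportFn L u) ∂μ ≤
      ENNReal.ofReal ((1 + δ) * supportFn L e) * μ U := by
  rw [← setLIntegral_const]
  refine setLIntegral_mono measurable_const fun u hu => ENNReal.ofReal_le_ofReal ?_
  have hR := hL.pos.le.trans (hL.radius_le_radius he)
  refine hL.supportFn_le_one_add_mul he hδ (le_trans ?_ hε)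
  gcongr
  exact (dist_eq_norm u e).symm.trans_le (hU hu)

variable [BorelSpace V]

lemma IsBetweenBalls.mul_measure_le_setLIntegral_supportFn (hL : IsBetweenBalls L ρ R)
    (he : ‖e‖ = 1) (hδ : 0 ≤ δ) (hε : R * ε ≤ δ * ρ) (hU : U ⊆ Metric.closedBall e ε)
    (hUs : U ⊆ Metric.sphere 0 1) :
    ENNReal.ofReal (supportFn L e) * μ U ≤
      ENNReal.ofReal (1 + δ) * ∫⁻ u in U, ENNReal.ofReal (supportFn L u) ∂μ := by
  have hmeas : Measurable fun u => ENNReal.ofReal (supportFn L u) :=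
    hL.continuous_supportFn.measurable.ennreal_ofReal
  rw [← setLIntegral_const, ← lintegral_const_mul _ hmeas]
  refine setLIntegral_mono (hmeas.const_mul _) fun u hu => ?_
  rw [← ENNReal.ofReal_mul (by positivity)]
  have hR := hL.pos.le.trans (hL.radius_le_radius he)
  refine ENNReal.ofReal_le_ofReal (hL.supportFn_le_one_add_mul
    (mem_sphere_zero_iff_norm.1 (hUs hu)) hδ (le_trans ?_ hε))
  gcongr
  exact (dist_eq_norm' u e).symm.trans_le (hU hu)

lemma IsBetweenBalls.ofReal_mul_setLIntegral_supportFn_le_volume_cone [FiniteDimensional ℝ V]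
    {n : ℕ} (hL : IsBetweenBalls L ρ R) (hn : finrank ℝ V = n + 1) (he : ‖e‖ = 1) (hδ : 0 < δ)
    (hδ' : δ < 1 / 5) (hε : R * ε ≤ δ * ρ) (hU : U ⊆ Metric.closedBall e ε)
    (hB : MeasurableSet B) (hBU : B ⊆ L ∩ outerSet L U) (hμ : μ U ≤ μHE[n] B) :
    ENNReal.ofReal ((1 - 5 * δ) ^ (n + 2)) * ∫⁻ u in U, ENNReal.ofReal (supportFn L u) ∂μ ≤
      (n + 1) * volume (Ioc (0 : ℝ) 1 • B) := by
  have hδ₁ : 0 ≤ 1 - 5 * δ := by linarith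
  have hH : 0 ≤ supportFn L e := hL.pos.le.trans (hL.le_supportFn he)
  have hfactor : (1 - 5 * δ) ^ (n + 2) * ((1 + δ) * supportFn L e) ≤
      (1 - 5 * δ) ^ (n + 1) * supportFn L e :=
    calc _ = (1 - 5 * δ) ^ (n + 1) * (((1 - 5 * δ) * (1 + δ)) * supportFn L e) := by ring
      _ ≤ (1 - 5 * δ) ^ (n + 1) * (1 * supportFn L e) := by gcongr; nlinarith
      _ = _ := by rw [one_mul]
  calc _ ≤ ENNReal.ofReal ((1 - 5 * δ) ^ (n + 2)) *
        (ENNReal.ofReal ((1 + δ) * supportFn L e) * μHE[n] B) := by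
        gcongr
        exact (hL.setLIntegral_supportFn_le he hδ.le hε hU).trans (by gcongr)
    _ ≤ ENNReal.ofReal ((1 - 5 * δ) ^ (n + 1) * supportFn L e) * μHE[n] B := by
        rw [← mul_assoc, ← ENNReal.ofReal_mul (by positivity)]
        gcongr
    _ ≤ _ := hL.mul_euclideanHausdorffMeasure_le_volume_cone hn he hδ hδ' hε hU hB hBU

end MixedVolume

section VolumeFromSupport

variable {n : ℕ} {K L : Set (Euc (n + 1))} {ρ R δ : ℝ}

lemma IsConvexBody.exists_pairwise_disjoint_subset_outerSet {ι : Type*} [Countable ι]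
    {U : ι → Set (Euc (n + 1))} (hK : IsConvexBody K) (hU : ∀ i, IsClosed (U i))
    (hUs : ∀ i, U i ⊆ unitSphere (n + 1))
    (hd : Pairwise (Function.onFun (AEDisjoint (areaMeasure K)) U)) :
    ∃ B : ι → Set (Euc (n + 1)), (∀ i, MeasurableSet (B i)) ∧ Pairwise (Function.onFun Disjoint B) ∧
      (∀ i, B i ⊆ K ∩ outerSet K (U i)) ∧ ∀ i, μHE[n] (B i) = areaMeasure K (U i) := by
  set ν := (μHE[n]).restrict (frontier K)
  have hpre (i : ι) : gaussMap K ⁻¹' U i =ᵐ[ν] (K ∩ outerSet K (U i) : Set _) := by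
    simpa only [inter_eq_left.2 (hUs i)] using hK.gaussMap_preimage_ae_eq (U i)
  have hfr (i : ι) : K ∩ outerSet K (U i) ⊆ frontier K :=
    inter_outerSet_subset_frontier fun h => zero_notMem_unitSphere (hUs i h)
  have hnull (i : ι) : NullMeasurableSet (K ∩ outerSet K (U i)) ν :=
    (hK.isClosed_inter_outerSet (hU i) (hUs i)).nullMeasurableSet
  have hdν : Pairwise (Function.onFun (AEDisjoint ν) fun i => K ∩ outerSet K (U i)) :=
    fun i j hij => by
      rw [Function.onFun, AEDisjoint, ← measure_congr ((hpre i).inter (hpre j)), ← preimage_inter,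
        ← Measure.map_apply_of_aemeasurable hK.aemeasurable_gaussMap
          ((hU i).inter (hU j)).measurableSet]
      exact hd hij
  obtain ⟨B, hBsub, hBae, hBmeas, hBdisj⟩ := exists_subordinate_pairwise_disjoint hnull hdν
  refine ⟨B, hBmeas, hBdisj, hBsub, fun i => ?_⟩
  rw [hK.areaMeasure_apply (hU i) (hUs i), ← Measure.restrict_eq_self _ (hfr i),
    ← Measure.restrict_eq_self _ ((hBsub i).trans (hfr i))]
  exact (measure_congr (hBae i)).symm

lemma IsConvexBody.ofReal_mul_lintegral_supportFn_le (hL : IsConvexBody L)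
    (hb : IsBetweenBalls L ρ R) (hδ : 0 < δ) (hδ' : δ < 1 / 5) :
    ENNReal.ofReal ((1 - 5 * δ) ^ (n + 2)) *
      ∫⁻ u, ENNReal.ofReal (supportFn L u) ∂(areaMeasure L) ≤ (n + 1) * volume L := by
  have := hL.isFiniteMeasure_areaMeasure
  obtain ⟨ε, hε, hRε⟩ := exists_pos_mul_lt (mul_pos hδ hb.pos) R
  obtain ⟨k, e, U, hU⟩ := exists_isFineCover (areaMeasure L) isCompact_unitSphere hε
  obtain ⟨B, hBmeas, hBdisj, hBsub, hBμ⟩ :=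
    hL.exists_pairwise_disjoint_subset_outerSet hU.isClosed hU.subset hU.aedisjoint
  have hBsph (i : Fin k) : B i ⊆ L ∩ outerSet L (Metric.sphere 0 1) :=
    (hBsub i).trans (inter_subset_inter_right _ (outerSet_mono (hU.subset i)))
  calc _ = ∑ i, ENNReal.ofReal ((1 - 5 * δ) ^ (n + 2)) *
        ∫⁻ u in U i, ENNReal.ofReal (supportFn L u) ∂(areaMeasure L) := by
        rw [hU.lintegral_eq_sum hL.areaMeasure_compl_unitSphere, Finset.mul_sum]
    _ ≤ ∑ i, (n + 1) * volume (Ioc (0 : ℝ) 1 • B i) := Finset.sum_le_sum fun i _ =>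
        hb.ofReal_mul_setLIntegral_supportFn_le_volume_cone finrank_euclideanSpace_fin
          (mem_sphere_zero_iff_norm.1 (hU.center_mem i)) hδ hδ' hRε.le (hU.subset_closedBall i)
          (hBmeas i) (hBsub i) (hBμ i).ge
    _ = (n + 1) * volume (⋃ i, Ioc (0 : ℝ) 1 • B i) := by
        rw [← Finset.mul_sum, measure_iUnion, tsum_fintype]
        · exact fun i j hij => hb.disjoint_cone (hBsph i) (hBsph j) (hBdisj hij)
        · exact fun i => hb.measurableSet_cone (hBsph i) (hBmeas i)
    _ ≤ (n + 1) * volume L := by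
        gcongr
        refine iUnion_subset fun i => smul_subset_iff.2 fun t ht x hx => ?_
        exact hL.1.smul_mem_of_zero_mem hb.zero_mem (hBsub i hx).1 ⟨ht.1.le, ht.2⟩

lemma IsConvexBody.lintegral_supportFn_le (hL : IsConvexBody L) (h0 : 0 ∈ interior L) :
    ∫⁻ u, ENNReal.ofReal (supportFn L u) ∂(areaMeasure L) ≤ (n + 1) * volume L := by
  obtain ⟨ρ, R, hb⟩ := exists_isBetweenBalls hL.2.1 h0
  refine le_of_eventually_ofReal_mul_le (f := fun δ => (1 - 5 * δ) ^ (n + 2)) (by fun_prop)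
    (by simp) ?_
  filter_upwards [Ioo_mem_nhdsGT (show (0 : ℝ) < 1 / 5 by norm_num)] with δ hδ
  exact hL.ofReal_mul_lintegral_supportFn_le hb hδ.1 hδ.2

end VolumeFromSupport

section CompactLimits

variable {X Y : Type*} [TopologicalSpace X] [T2Space X] [TopologicalSpace Y]
  {f : X → Y}

lemma image_iInter_of_directed_isCompact [T1Space Y] {ι : Type*} [Nonempty ι]
    {s : ι → Set X} (hf : Continuous f) (hd : Directed (· ⊇ ·) s) (hs : ∀ i, IsCompact (s i)) :
    f '' ⋂ i, s i = ⋂ i, f '' s i := by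
  refine (image_iInter_subset s f).antisymm fun y hy => ?_
  have hfib : IsClosed (f ⁻¹' {y}) := isClosed_singleton.preimage hf
  obtain ⟨x, hx⟩ := IsCompact.nonempty_iInter_of_directed_nonempty_isCompact_isClosed
    (fun i => s i ∩ f ⁻¹' {y})
    (fun i j => (hd i j).imp fun k hk =>
      ⟨inter_subset_inter_left _ hk.1, inter_subset_inter_left _ hk.2⟩)
    (fun i => (mem_iInter.1 hy i).imp fun x hx => hx)
    (fun i => (hs i).inter_right hfib) (fun i => (hs i).isClosed.inter hfib)
  rw [mem_iInter] at hx
  exact ⟨x, mem_iInter.2 fun i => (hx i).1, (hx (Classical.arbitrary ι)).2⟩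

lemma tendsto_measure_image_biInter_gt [T2Space Y] [MeasurableSpace Y] [BorelSpace Y]
    (μ : Measure Y) [IsFiniteMeasureOnCompacts μ] {s : ℝ → Set X} {a : ℝ} (hf : Continuous f)
    (hm : MonotoneOn s (Ioi a)) (hs : ∀ t > a, IsCompact (s t)) :
    Filter.Tendsto (fun t => μ (f '' s t)) (𝓝[>] a) (𝓝 (μ (f '' ⋂ t ∈ Ioi a, s t))) := by
  have himage : f '' ⋂ t ∈ Ioi a, s t = ⋂ t ∈ Ioi a, f '' s t := by
    have hd : Directed (· ⊇ ·) fun t : Ioi a => s t :=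
      directed_of_isDirected_ge fun i j hij => hm i.2 j.2 hij
    have := image_iInter_of_directed_isCompact hf hd fun t => hs t t.2
    simpa only [iInter_coe_set] using this
  rw [himage]
  exact tendsto_measure_biInter_gt
    (fun t ht => ((hs t ht).image hf).isClosed.measurableSet.nullMeasurableSet)
    (fun i j hi hij => image_mono (hm hi (hi.trans_le hij) hij))
    ⟨a + 1, lt_add_one a, ((hs _ (lt_add_one a)).image hf).measure_lt_top.ne⟩

end CompactLimits

section SmallPerturbations

variable {V : Type*} [NormedAddCommGroup V] [NormedSpace ℝ V] {K L : Set V}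

lemma monotoneOn_add_smul (hL : Convex ℝ L) (h0 : 0 ∈ L) :
    MonotoneOn (fun t : ℝ => K + t • L) (Ioi 0) := fun s hs t ht hst => by
  refine add_subset_add_left fun x hx => ?_
  obtain ⟨y, hy, rfl⟩ := hx
  refine ⟨(s / t) • y, hL.smul_mem_of_zero_mem h0 hy
    ⟨div_nonneg hs.le ht.le, (div_le_one ht).2 hst⟩, ?_⟩
  simp only [smul_smul, mul_div_cancel₀ s ht.ne']

lemma biInter_gt_add_smul (hK : IsClosed K) (hL : Bornology.IsBounded L) (h0 : 0 ∈ L) :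
    ⋂ t ∈ Ioi (0 : ℝ), (K + t • L) = K := by
  refine Subset.antisymm (fun x hx => ?_) (subset_iInter₂ fun t _ =>
    subset_add_left K ⟨0, h0, smul_zero t⟩)
  obtain ⟨R, -, hLR⟩ := hL.exists_pos_norm_le
  rw [← hK.closure_eq, Metric.mem_closure_iff]
  intro ε hε
  obtain ⟨t, ht, hRt⟩ := exists_pos_mul_lt hε R
  obtain ⟨y, hy, _, ⟨z, hz, rfl⟩, rfl⟩ := mem_iInter₂.1 hx t ht
  refine ⟨y, hy, ?_⟩
  rw [dist_self_add_left, norm_smul, Real.norm_of_nonneg ht.le, mul_comm]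
  exact lt_of_le_of_lt (by gcongr; exact hLR z hz) hRt

end SmallPerturbations

section MinkowskiFirst

variable {V : Type*} [NormedAddCommGroup V] [InnerProductSpace ℝ V] {K L U : Set V} {e p q : V}
  {ρ R δ ε t : ℝ}

lemma IsBetweenBalls.inner_sub_le_of_mem_add_smul (hL : IsBetweenBalls L ρ R) (he : ‖e‖ = 1)
    (hδ : 0 ≤ δ) (hδ' : δ < 1) (hε : R * ε ≤ δ * ρ) (hU : U ⊆ Metric.closedBall e ε) (ht : 0 ≤ t)
    (hp : p ∈ K + t • L) (hq : q ∈ outerSet K U) (hpq : hyperplaneProj e p = hyperplaneProj e q) :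
    ⟪p - q, e⟫ ≤ t * ((1 + δ) / (1 - δ) * supportFn L e) := by
  obtain ⟨u, hu, hqu⟩ := hq
  obtain ⟨x, hx, _, ⟨y, hy, rfl⟩, rfl⟩ := hp
  have hue : ‖u - e‖ ≤ ε := (dist_eq_norm u e).symm.trans_le (hU hu)
  have hR := hL.pos.trans_le (hL.radius_le_radius he)
  have hH : 0 ≤ supportFn L e := hL.pos.le.trans (hL.le_supportFn he)
  set d := x + t • y - q
  have hd : d = ⟪d, e⟫ • e := eq_of_hyperplaneProj_eq he
    (by rw [map_sub, hpq, sub_self, map_smul, hyperplaneProj_self, smul_zero])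
    (by simp [real_inner_smul_left, he])
  have heu : 1 - δ ≤ ⟪e, u⟫ :=
    calc 1 - δ ≤ ⟪e, e⟫ - ‖e‖ * ‖e - u‖ := by
          rw [real_inner_self_eq_norm_sq, he, one_pow, one_mul, norm_sub_rev]
          gcongr
          exact hue.trans (hL.le_of_mul_le_mul he hδ hε)
      _ ≤ ⟪e, e⟫ - ⟪e, e - u⟫ := by gcongr; exact real_inner_le_norm e (e - u)
      _ = ⟪e, u⟫ := by rw [← inner_sub_right, sub_sub_cancel]
  have hdu : ⟪d, e⟫ * ⟪e, u⟫ ≤ t * ((1 + δ) * supportFn L e) :=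
    calc ⟪d, e⟫ * ⟪e, u⟫ = ⟪d, u⟫ := by rw [← real_inner_smul_left, ← hd]
      _ = ⟪x - q, u⟫ + t * ⟪y, u⟫ := by
          rw [← real_inner_smul_left, ← inner_add_left, sub_add_eq_add_sub]
      _ ≤ 0 + t * supportFn L u := by gcongr; exacts [hqu x hx, hL.inner_le_supportFn hy u]
      _ ≤ t * ((1 + δ) * supportFn L e) := by
          rw [zero_add]
          gcongr
          exact hL.supportFn_le_one_add_mul he hδ (le_trans (by gcongr) hε)
  have hδ₁ : 0 < 1 - δ := sub_pos.2 hδ'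
  rw [div_mul_eq_mul_div, ← mul_div_assoc, le_div_iff₀ hδ₁]
  rcases le_total 0 ⟪d, e⟫ with hpos | hneg
  · exact le_trans (by gcongr) hdu
  · exact (mul_nonpos_of_nonpos_of_nonneg hneg hδ₁.le).trans (by positivity)

variable [FiniteDimensional ℝ V]

lemma subset_union_iUnion_outerSet {ι : Type*} {U : ι → Set V} (hK : Convex ℝ K)
    (hK' : (interior K).Nonempty) (hU : Metric.sphere 0 1 ⊆ ⋃ i, U i) (A : Set V) :
    A ⊆ K ∪ ⋃ i, A ∩ outerSet K (U i) := fun p hp => by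
  refine or_iff_not_imp_left.2 fun hpK => ?_
  obtain ⟨u, hu, h⟩ := exists_unit_normal hK hK' fun h => hpK (interior_subset h)
  obtain ⟨i, hi⟩ := mem_iUnion.1 (hU (mem_sphere_zero_iff_norm.2 hu))
  exact mem_iUnion.2 ⟨i, hp, u, hi, h⟩

variable [MeasurableSpace V] [BorelSpace V] {n : ℕ}

lemma volume_add_mul_le_volume_add_smul (hn : finrank ℝ V = n + 1) (hK : IsCompact K)
    (hK0 : K.Nonempty) (hL : IsCompact L) (hL0 : L.Nonempty) (ht : 0 ≤ t) :
    volume K + (n + 1) * (volume K ^ ((n + 1 : ℕ) : ℝ)⁻¹) ^ n *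
      (ENNReal.ofReal t * volume L ^ ((n + 1 : ℕ) : ℝ)⁻¹) ≤ volume (K + t • L) := by
  have : Nontrivial V := nontrivial_of_finrank_pos (R := ℝ) (by omega)
  set a := volume K ^ ((n + 1 : ℕ) : ℝ)⁻¹
  set b := volume L ^ ((n + 1 : ℕ) : ℝ)⁻¹
  have htL : volume (t • L) ^ ((n + 1 : ℕ) : ℝ)⁻¹ = ENNReal.ofReal t * b := by
    rw [Measure.addHaar_smul_of_nonneg _ ht, hn, ENNReal.mul_rpow_of_nonneg _ _ (by positivity),
      ENNReal.ofReal_pow ht, ENNReal.pow_rpow_inv_natCast n.succ_ne_zero]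
  have hBM := rpow_measure_add_rpow_measure_le volume hK (hL.smul t) hK0 hL0.smul_set
  rw [hn, htL] at hBM
  calc volume K + (n + 1) * a ^ n * (ENNReal.ofReal t * b)
      = a ^ (n + 1) + (n + 1 : ℕ) * a ^ (n + 1 - 1) * (ENNReal.ofReal t * b) := by
        rw [ENNReal.rpow_inv_natCast_pow n.succ_ne_zero, Nat.cast_succ, Nat.add_sub_cancel]
    _ ≤ (a + ENNReal.ofReal t * b) ^ (n + 1) := pow_add_mul_le_add_pow zero_le zero_le _
    _ ≤ (volume (K + t • L) ^ ((n + 1 : ℕ) : ℝ)⁻¹) ^ (n + 1) := by gcongr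
    _ = volume (K + t • L) := ENNReal.rpow_inv_natCast_pow n.succ_ne_zero _

variable {k : ℕ} {U : Fin k → Set V} {e : Fin k → V} {μ : Measure V}

lemma IsBetweenBalls.volume_add_smul_le (hb : IsBetweenBalls L ρ R) (hK : Convex ℝ K)
    (hKc : IsCompact K) (hK' : (interior K).Nonempty)
    (hU : IsFineCover μ (Metric.sphere 0 1) ε e U) (hδ : 0 ≤ δ) (hδ' : δ < 1)
    (hε : R * ε ≤ δ * ρ) (ht : 0 ≤ t) :
    volume (K + t • L) ≤ volume K + ENNReal.ofReal t *
      ∑ i, ENNReal.ofReal ((1 + δ) / (1 - δ) * supportFn L (e i)) *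
        volume (hyperplaneProj (e i) '' ((K + t • L) ∩ outerSet K (U i))) := by
  calc volume (K + t • L)
      ≤ volume K + ∑ i, volume ((K + t • L) ∩ outerSet K (U i)) :=
        (measure_mono (subset_union_iUnion_outerSet hK hK' hU.subset_iUnion _)).trans <|
          (measure_union_le _ _).trans (by gcongr; exact measure_iUnion_fintype_le _ _)
    _ ≤ _ := by
        rw [Finset.mul_sum]
        gcongr with i
        rw [← mul_assoc, ← ENNReal.ofReal_mul ht]
        exact volume_le_of_fiber_le (mem_sphere_zero_iff_norm.1 (hU.center_mem i))
          ((hKc.add (hb.isCompact.smul t)).inter_right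
            (isClosed_outerSet (hU.isCompact (isCompact_sphere 0 1) i)))
          fun p hp q hq hpq => hb.inner_sub_le_of_mem_add_smul
            (mem_sphere_zero_iff_norm.1 (hU.center_mem i)) hδ hδ' hε (hU.subset_closedBall i) ht
            hp.1 hq.2 hpq

lemma tendsto_volume_hyperplaneProj_image {e : V} {U : Set V} (hK : IsCompact K)
    (hL : IsCompact L) (hL' : Convex ℝ L) (h0 : 0 ∈ L) (hU : IsCompact U) :
    Filter.Tendsto
      (fun t : ℝ => volume (hyperplaneProj e '' ((K + t • L) ∩ outerSet K U))) (𝓝[>] 0)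
      (𝓝 (volume (hyperplaneProj e '' (K ∩ outerSet K U)))) := by
  have hlim := tendsto_measure_image_biInter_gt volume (hyperplaneProj e).continuous
    (fun s hs t ht hst => inter_subset_inter_left (outerSet K U)
      (monotoneOn_add_smul (K := K) hL' h0 hs ht hst))
    fun t _ => (hK.add (hL.smul t)).inter_right (isClosed_outerSet hU)
  rwa [biInter_inter nonempty_Ioi, biInter_gt_add_smul hK.isClosed hL.isBounded h0] at hlim

lemma IsBetweenBalls.mul_le_sum_volume_hyperplaneProj_image (hb : IsBetweenBalls L ρ R)
    (hL : Convex ℝ L) (hK : Convex ℝ K) (hKc : IsCompact K) (hK' : (interior K).Nonempty)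
    (hn : finrank ℝ V = n + 1) (hU : IsFineCover μ (Metric.sphere 0 1) ε e U) (hδ : 0 ≤ δ)
    (hδ' : δ < 1) (hε : R * ε ≤ δ * ρ) :
    (n + 1) * (volume K ^ ((n + 1 : ℕ) : ℝ)⁻¹) ^ n * volume L ^ ((n + 1 : ℕ) : ℝ)⁻¹ ≤
      ∑ i, ENNReal.ofReal ((1 + δ) / (1 - δ) * supportFn L (e i)) *
        volume (hyperplaneProj (e i) '' (K ∩ outerSet K (U i))) := by
  refine ge_of_tendsto (tendsto_finsetSum _ fun i _ => ENNReal.Tendsto.const_mul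
    (tendsto_volume_hyperplaneProj_image hKc hb.isCompact hL hb.zero_mem
      (hU.isCompact (isCompact_sphere 0 1) i))
    (Or.inr ENNReal.ofReal_ne_top)) ?_
  filter_upwards [self_mem_nhdsWithin] with t ht
  have ht' : 0 < ENNReal.ofReal t := ENNReal.ofReal_pos.2 ht
  have hle := (volume_add_mul_le_volume_add_smul hn hKc (hK'.mono interior_subset) hb.isCompact
    ⟨0, hb.zero_mem⟩ ht.le).trans (hb.volume_add_smul_le hK hKc hK' hU hδ hδ' hε ht.le)
  rw [mul_left_comm] at hle
  exact (ENNReal.mul_le_mul_iff_right ht'.ne' ENNReal.ofReal_ne_top).1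
    ((ENNReal.add_le_add_iff_left hKc.measure_lt_top.ne).1 hle)

end MinkowskiFirst

section MinkowskiFirstBody

variable {n : ℕ} {K L U : Set (Euc (n + 1))} {e : Euc (n + 1)}

lemma IsConvexBody.volume_hyperplaneProj_image_le (hK : IsConvexBody K) (he : ‖e‖ = 1)
    (hU : IsClosed U) (hUs : U ⊆ unitSphere (n + 1)) :
    volume (hyperplaneProj e '' (K ∩ outerSet K U)) ≤ areaMeasure K U := by
  have hlip : LipschitzWith 1 (hyperplaneProj e) :=
    ContinuousLinearMap.lipschitzWith_of_opNorm_le (Submodule.orthogonalProjectionOnto_norm_le _)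
  rw [hK.areaMeasure_apply hU hUs,
    ← euclideanHausdorffMeasure_hyperplane finrank_euclideanSpace_fin he]
  simpa using euclideanHausdorffMeasure_image_le hlip.lipschitzOnWith n

theorem minkowski_first_inequality (hK : IsConvexBody K) (hL : IsConvexBody L)
    (h0 : 0 ∈ interior L) :
    (n + 1) * (volume K ^ ((n + 1 : ℕ) : ℝ)⁻¹) ^ n * volume L ^ ((n + 1 : ℕ) : ℝ)⁻¹ ≤
      ∫⁻ u, ENNReal.ofReal (supportFn L u) ∂(areaMeasure K) := by
  obtain ⟨ρ, R, hb⟩ := exists_isBetweenBalls hL.2.1 h0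
  have := hK.isFiniteMeasure_areaMeasure
  have hcont : ContinuousAt (fun δ : ℝ => (1 - δ) / (1 + δ) ^ 2) 0 := by
    fun_prop (disch := norm_num)
  refine le_of_eventually_ofReal_mul_le hcont (by simp) ?_
  filter_upwards [Ioo_mem_nhdsGT one_pos] with δ ⟨hδ, hδ'⟩
  have : 0 < 1 - δ := sub_pos.2 hδ'
  obtain ⟨ε, hε, hRε⟩ := exists_pos_mul_lt (mul_pos hδ hb.pos) R
  obtain ⟨k, e, U, hU⟩ := exists_isFineCover (areaMeasure K) isCompact_unitSphere hε
  have he (i) : ‖e i‖ = 1 := mem_sphere_zero_iff_norm.1 (hU.center_mem i)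
  calc _ ≤ ENNReal.ofReal ((1 - δ) / (1 + δ) ^ 2) *
        ∑ i, ENNReal.ofReal ((1 + δ) / (1 - δ) * supportFn L (e i)) * areaMeasure K (U i) := by
        gcongr
        refine (hb.mul_le_sum_volume_hyperplaneProj_image hL.1 hK.1 hK.2.1 hK.2.2
          finrank_euclideanSpace_fin hU hδ.le hδ' hRε.le).trans ?_
        gcongr with i
        exact hK.volume_hyperplaneProj_image_le (he i) (hU.isClosed i) (hU.subset i)
    _ ≤ ENNReal.ofReal ((1 - δ) / (1 + δ) ^ 2) *
        ∑ i, ENNReal.ofReal ((1 + δ) / (1 - δ) * (1 + δ)) *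
          ∫⁻ u in U i, ENNReal.ofReal (supportFn L u) ∂(areaMeasure K) := by
        gcongr ENNReal.ofReal _ * ∑ i, ?_ with i
        rw [ENNReal.ofReal_mul (by positivity), ENNReal.ofReal_mul (by positivity), mul_assoc,
          mul_assoc]
        gcongr _ * ?_
        exact hb.mul_measure_le_setLIntegral_supportFn (he i) hδ.le hRε.le
          (hU.subset_closedBall i) (hU.subset i)
    _ = ∫⁻ u, ENNReal.ofReal (supportFn L u) ∂(areaMeasure K) := by
        rw [← Finset.mul_sum, ← hU.lintegral_eq_sum hK.areaMeasure_compl_unitSphere, ← mul_assoc,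
          ← ENNReal.ofReal_mul (by positivity)]
        have : (1 - δ) / (1 + δ) ^ 2 * ((1 + δ) / (1 - δ) * (1 + δ)) = 1 := by
          field_simp
        rw [this, ENNReal.ofReal_one, one_mul]

end MinkowskiFirstBody

section Translation

lemma frontier_vadd {G X : Type*} [AddGroup G] [AddAction G X] [TopologicalSpace X]
    [ContinuousConstVAdd G X] (p : G) (K : Set X) : frontier (p +ᵥ K) = p +ᵥ frontier K :=
  ((Homeomorph.vadd p).image_frontier K).symm

variable {m : ℕ} (p : Euc m) (K : Set (Euc m))

lemma isOutwardNormalAt_vadd (x : Euc m) :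
    IsOutwardNormalAt (p +ᵥ K) (p +ᵥ x) = IsOutwardNormalAt K x := by
  funext u
  rw [IsOutwardNormalAt, IsOutwardNormalAt, frontier_vadd, vadd_mem_vadd_set_iff]
  simp only [← image_vadd, forall_mem_image, vadd_eq_add, add_sub_add_left_eq_sub]

lemma gaussMap_vadd (x : Euc m) : gaussMap (p +ᵥ K) (p +ᵥ x) = gaussMap K x := by
  unfold gaussMap
  rw [isOutwardNormalAt_vadd]

lemma surfMeasure_vadd : surfMeasure (p +ᵥ K) = surfMeasure K := by
  have hemb : MeasurableEmbedding (p +ᵥ · : Euc m → Euc m) := measurableEmbedding_const_vadd p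
  have hpres := ((IsometryEquiv.constVAdd p).measurePreserving_hausdorffMeasure
    ((m : ℝ) - 1)).restrict_image_emb hemb (frontier K)
  have hcomp : gaussMap (p +ᵥ K) ∘ (p +ᵥ ·) = gaussMap K := funext (gaussMap_vadd p K)
  have hmap : μH[(m : ℝ) - 1].restrict (frontier (p +ᵥ K)) =
      (μH[(m : ℝ) - 1].restrict (frontier K)).map (p +ᵥ ·) := by
    rw [frontier_vadd]
    exact hpres.map_eq.symm
  rw [surfMeasure, surfMeasure, hmap]
  by_cases hmeas : AEMeasurable (gaussMap K) (μH[(m : ℝ) - 1].restrict (frontier K))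
  · rw [AEMeasurable.map_map_of_aemeasurable _ hemb.measurable.aemeasurable, hcomp]
    rwa [hemb.aemeasurable_map_iff, hcomp]
  · rw [Measure.map_of_not_aemeasurable hmeas, Measure.map_of_not_aemeasurable]
    rwa [hemb.aemeasurable_map_iff, hcomp]

variable {K}

lemma IsConvexBody.vadd (hK : IsConvexBody K) : IsConvexBody (p +ᵥ K) :=
  ⟨hK.1.vadd p, hK.2.1.vadd p, by rw [interior_vadd]; exact hK.2.2.vadd_set⟩

end Translation

lemma IsConvexBody.volume_le_of_areaMeasure_le {n : ℕ} (hn : n ≠ 0) {K L : Set (Euc (n + 1))}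
    (hK : IsConvexBody K) (hL : IsConvexBody L) (h0 : 0 ∈ interior L)
    (hdom : areaMeasure K ≤ areaMeasure L) : volume K ≤ volume L := by
  have hvol : volume L ≠ 0 := (Measure.measure_pos_of_nonempty_interior _ hL.2.2).ne'
  have hinv : (0 : ℝ) < ((n + 1 : ℕ) : ℝ)⁻¹ := by positivity
  set a := volume K ^ ((n + 1 : ℕ) : ℝ)⁻¹
  set b := volume L ^ ((n + 1 : ℕ) : ℝ)⁻¹
  have hb0 : b ≠ 0 := (ENNReal.rpow_eq_zero_iff_of_pos hinv).not.2 hvol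
  have hbtop : b ≠ ∞ := ENNReal.rpow_ne_top_of_nonneg hinv.le hL.2.1.measure_ne_top
  have hchain : (n + 1) * a ^ n * b ≤ (n + 1) * b ^ n * b :=
    calc (n + 1) * a ^ n * b ≤ ∫⁻ u, ENNReal.ofReal (supportFn L u) ∂(areaMeasure K) :=
          minkowski_first_inequality hK hL h0
      _ ≤ ∫⁻ u, ENNReal.ofReal (supportFn L u) ∂(areaMeasure L) := lintegral_mono' hdom le_rfl
      _ ≤ (n + 1) * volume L := hL.lintegral_supportFn_le h0
      _ = (n + 1) * b ^ n * b := by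
          rw [mul_assoc, ← pow_succ, ENNReal.rpow_inv_natCast_pow n.succ_ne_zero]
  have hpow : a ^ n ≤ b ^ n := by
    rwa [ENNReal.mul_le_mul_iff_left hb0 hbtop,
      ENNReal.mul_le_mul_iff_right (by positivity) (by finiteness)] at hchain
  exact (ENNReal.rpow_le_rpow_iff hinv).1 ((ENNReal.pow_le_pow_left_iff hn).1 hpow)

/-- monotonicity of volume under domination of surface area measures. -/
theorem volume_monotone_of_surf_le {m : ℕ} (hm : 2 ≤ m)
    (K L : Set (Euc m)) (hK : IsConvexBody K) (hL : IsConvexBody L)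
    (hdom : ∀ U : Set (Euc m), MeasurableSet U → surfMeasure K U ≤ surfMeasure L U) :
    volume K ≤ volume L := by
  obtain ⟨n, rfl⟩ := Nat.exists_eq_add_of_le' (one_le_two.trans hm)
  obtain ⟨p, hp⟩ := hL.2.2
  have h0 : 0 ∈ interior (-p +ᵥ L) := by
    rw [interior_vadd]
    exact ⟨p, hp, neg_add_cancel p⟩
  have harea : areaMeasure K ≤ areaMeasure (-p +ᵥ L) := by
    rw [areaMeasure_eq_smul_surfMeasure, areaMeasure_eq_smul_surfMeasure, surfMeasure_vadd]
    gcongr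
    exact Measure.le_iff.2 hdom
  rw [← measure_vadd volume (-p) L]
  exact hK.volume_le_of_areaMeasure_le (by omega) (hL.vadd (-p)) h0 harea
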